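/- arXiv:1906.07169 — 4 statements merged into one kernel-verified Lean document; each statement's English description precedes it below -/
import Mathlib

section
/- As n → ∞, p(n) ∼ (1/(4n√3))·exp(π·√(2n/3)) (the Hardy–Ramanujan asymptotic formula for the number of integer partitions of n). -/
open Filter Asymptotics Topology

/-!
The circle method. By Euler's product, the partition numbers are the coefficients of `1 / φ(q)`,
where `φ(q) = ∏ (1 - q ^ n)`, so Cauchy's formula expresses `p(n)` as an integral of
`exp (n s) / φ(exp (-s))` over a vertical segment `s = σ + i θ`, `|θ| ≤ π`. The functional
equation of the Dedekind eta function gives `1 / φ(exp (-s)) ≈ √(s / 2π) exp (π² / (6s))` near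
`s = 0`, and `σ = π / √(6n)` is the saddle point of `π² / (6s) + n s`. On the major arc `|θ| ≤ σ`
the integrand, suitably rescaled, is close to a Gaussian. On the minor arc `σ ≤ |θ| ≤ π`, comparing
the logarithmic series of `φ(q)` and `φ(|q|)` term by term shows that `1 / |φ(q)|` is exponentially
smaller than `1 / φ(|q|)`. Dominated convergence along the rescaled segment gives the constant.
-/

namespace HardyRamanujan

open scoped Real Complex PowerSeries
open Complex (I)
open Finset (range)

section EulerProduct

open PowerSeries

/-- The formal geometric series `1 / (1 - X ^ (k + 1)) = ∑ j, X ^ ((k + 1) * j)`, given by its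
coefficients: it enumerates the partitions all of whose parts equal `k + 1`. -/
noncomputable def geometricSeries (k : ℕ) : ℕ⟦X⟧ :=
  .mk fun m ↦ if k + 1 ∣ m then 1 else 0

/-- The generating function of the partitions into parts of size at most `N`. -/
noncomputable def boundedPartsSeries (N : ℕ) : ℕ⟦X⟧ :=
  ∏ k ∈ range N, geometricSeries k

lemma boundedPartsSeries_succ (N : ℕ) :
    boundedPartsSeries (N + 1) = boundedPartsSeries N * geometricSeries N :=
  Finset.prod_range_succ _ _

open scoped PowerSeries.WithPiTopology in
lemma hasSum_X_pow_geometricSeries (k : ℕ) :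
    HasSum (fun j : ℕ ↦ (X : ℕ⟦X⟧) ^ ((k + 1) * j)) (geometricSeries k) := by
  rw [WithPiTopology.hasSum_iff_hasSum_coeff]
  intro d
  simp only [coeff_X_pow, geometricSeries, coeff_mk]
  split_ifs with hd
  · obtain ⟨e, rfl⟩ := hd
    simpa [eq_comm] using hasSum_ite_eq e 1
  · convert! hasSum_zero with j
    exact if_neg fun h ↦ hd ⟨j, h⟩

open scoped PowerSeries.WithPiTopology in
lemma tendsto_coeff_boundedPartsSeries (m : ℕ) :
    Tendsto (fun N ↦ coeff m (boundedPartsSeries N)) atTop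
      (𝓝 (Fintype.card (Nat.Partition m))) := by
  have hprod := (Nat.Partition.hasProd_powerSeriesMk_card_restricted ℕ
    (fun _ ↦ True)).tendsto_prod_nat
  rw [WithPiTopology.tendsto_iff_coeff_tendsto] at hprod
  simpa [boundedPartsSeries, Nat.Partition.restricted,
    (hasSum_X_pow_geometricSeries _).tsum_eq] using hprod m

lemma monotone_coeff_boundedPartsSeries (m : ℕ) :
    Monotone fun N ↦ coeff m (boundedPartsSeries N) := by
  refine monotone_nat_of_le_succ fun N ↦ ?_
  rw [boundedPartsSeries_succ, coeff_mul]
  calc coeff m (boundedPartsSeries N)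
      = coeff m (boundedPartsSeries N) * coeff 0 (geometricSeries N) := by
        simp [geometricSeries]
    _ ≤ _ := Finset.single_le_sum (f := fun ij : ℕ × ℕ ↦
        coeff ij.1 (boundedPartsSeries N) * coeff ij.2 (geometricSeries N))
        (fun _ _ ↦ Nat.zero_le _) (a := (m, 0)) (by simp)

lemma coeff_boundedPartsSeries_le (N m : ℕ) :
    coeff m (boundedPartsSeries N) ≤ Fintype.card (Nat.Partition m) :=
  (monotone_coeff_boundedPartsSeries m).ge_of_tendsto (tendsto_coeff_boundedPartsSeries m) N

variable {𝕜 : Type*} [RCLike 𝕜]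

lemma hasSum_coeff_mul_mul_pow {A B : ℕ⟦X⟧} {z a b : 𝕜}
    (hA : HasSum (fun m ↦ ((coeff m A : ℕ) : 𝕜) * z ^ m) a)
    (hB : HasSum (fun m ↦ ((coeff m B : ℕ) : 𝕜) * z ^ m) b) :
    HasSum (fun m ↦ ((coeff m (A * B) : ℕ) : 𝕜) * z ^ m) (a * b) := by
  have hconv (m : ℕ) : ∑ ij ∈ Finset.HasAntidiagonal.antidiagonal m,
      ((coeff ij.1 A : ℕ) : 𝕜) * z ^ ij.1 * (((coeff ij.2 B : ℕ) : 𝕜) * z ^ ij.2) =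
        ((coeff m (A * B) : ℕ) : 𝕜) * z ^ m := by
    rw [coeff_mul, Nat.cast_sum, Finset.sum_mul]
    refine Finset.sum_congr rfl fun ij hij ↦ ?_
    rw [← Finset.HasAntidiagonal.mem_antidiagonal.mp hij]
    push_cast
    ring
  have hsum := (summable_norm_sum_mul_antidiagonal_of_summable_norm
    hA.summable.norm hB.summable.norm).of_norm.hasSum
  rw [← tsum_mul_tsum_eq_tsum_sum_antidiagonal_of_summable_norm hA.summable.norm
    hB.summable.norm, hA.tsum_eq, hB.tsum_eq] at hsum
  simpa only [hconv] using hsum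

lemma norm_pow_succ_lt_one {z : 𝕜} (hz : ‖z‖ < 1) (k : ℕ) : ‖z ^ (k + 1)‖ < 1 := by
  simpa using pow_lt_one₀ (norm_nonneg z) hz k.succ_ne_zero

lemma hasSum_coeff_geometricSeries_mul_pow (k : ℕ) {z : 𝕜} (hz : ‖z‖ < 1) :
    HasSum (fun m ↦ ((coeff m (geometricSeries k) : ℕ) : 𝕜) * z ^ m) (1 - z ^ (k + 1))⁻¹ := by
  have hinj : Function.Injective fun j : ℕ ↦ (k + 1) * j := mul_right_injective₀ k.succ_ne_zero
  have hsupp : ∀ m ∉ Set.range fun j : ℕ ↦ (k + 1) * j,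
      ((coeff m (geometricSeries k) : ℕ) : 𝕜) * z ^ m = 0 := by
    intro m hm
    have hdvd : ¬ k + 1 ∣ m := fun ⟨j, hj⟩ ↦ hm ⟨j, hj.symm⟩
    simp [geometricSeries, hdvd]
  rw [← hinj.hasSum_iff hsupp]
  simpa [Function.comp_def, geometricSeries, pow_mul] using
    hasSum_geometric_of_norm_lt_one (norm_pow_succ_lt_one hz k)

lemma hasSum_coeff_boundedPartsSeries_mul_pow (N : ℕ) {z : 𝕜} (hz : ‖z‖ < 1) :
    HasSum (fun m ↦ ((coeff m (boundedPartsSeries N) : ℕ) : 𝕜) * z ^ m)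
      (∏ k ∈ range N, (1 - z ^ (k + 1)))⁻¹ := by
  induction N with
  | zero =>
    simpa [boundedPartsSeries] using
      hasSum_single (f := fun m ↦ ((coeff m (boundedPartsSeries 0) : ℕ) : 𝕜) * z ^ m) 0
        fun m hm ↦ by simp [boundedPartsSeries, coeff_one, hm]
  | succ N ih =>
    rw [boundedPartsSeries_succ, Finset.prod_range_succ, mul_inv]
    exact hasSum_coeff_mul_mul_pow ih (hasSum_coeff_geometricSeries_mul_pow N hz)

/-- Euler's function `φ(q) = ∏ (1 - q ^ n)` over `n ≥ 1`, whose inverse is the generating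
function of the partition numbers. It is meaningful for `‖q‖ < 1`. -/
noncomputable def eulerFunction (q : 𝕜) : 𝕜 := ∏' n : ℕ, (1 - q ^ (n + 1))

lemma summable_norm_neg_pow_succ {q : 𝕜} (hq : ‖q‖ < 1) :
    Summable fun n : ℕ ↦ ‖-q ^ (n + 1)‖ := by
  simpa using (summable_nat_add_iff 1).mpr (summable_geometric_of_lt_one (norm_nonneg q) hq)

lemma hasProd_eulerFunction {q : 𝕜} (hq : ‖q‖ < 1) :
    HasProd (fun n : ℕ ↦ 1 - q ^ (n + 1)) (eulerFunction q) := by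
  have hmul : Multipliable fun n : ℕ ↦ 1 + -q ^ (n + 1) :=
    multipliable_one_add_of_summable (summable_norm_neg_pow_succ hq)
  simpa only [eulerFunction, sub_eq_add_neg] using hmul.hasProd

lemma eulerFunction_ne_zero {q : 𝕜} (hq : ‖q‖ < 1) : eulerFunction q ≠ 0 := by
  have hfactor (n : ℕ) : 1 + -q ^ (n + 1) ≠ 0 := by
    rw [← sub_eq_add_neg, sub_ne_zero]
    intro h
    simpa [← h] using norm_pow_succ_lt_one hq n
  simpa only [eulerFunction, sub_eq_add_neg] using
    tprod_one_add_ne_zero_of_summable hfactor (summable_norm_neg_pow_succ hq)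

lemma tendsto_inv_prod_one_sub_pow {q : 𝕜} (hq : ‖q‖ < 1) :
    Tendsto (fun N ↦ (∏ k ∈ range N, (1 - q ^ (k + 1)))⁻¹) atTop (𝓝 (eulerFunction q)⁻¹) :=
  (hasProd_eulerFunction hq).tendsto_prod_nat.inv₀ (eulerFunction_ne_zero hq)

lemma tendsto_natCast_coeff_boundedPartsSeries (m : ℕ) :
    Tendsto (fun N ↦ ((coeff m (boundedPartsSeries N) : ℕ) : 𝕜)) atTop
      (𝓝 (Fintype.card (Nat.Partition m) : 𝕜)) :=
  (continuous_of_discreteTopology (f := Nat.cast)).continuousAt.tendsto.comp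
    (tendsto_coeff_boundedPartsSeries m)

lemma summable_card_partition_mul_pow {r : ℝ} (hr0 : 0 ≤ r) (hr1 : r < 1) :
    Summable fun m : ℕ ↦ (Fintype.card (Nat.Partition m) : ℝ) * r ^ m := by
  have hr : ‖r‖ < 1 := by rwa [Real.norm_of_nonneg hr0]
  refine summable_of_sum_range_le (c := (eulerFunction r)⁻¹) (fun m ↦ by positivity) fun M ↦ ?_
  refine le_of_tendsto_of_tendsto'
    (tendsto_finsetSum (range M) fun m _ ↦
      (tendsto_natCast_coeff_boundedPartsSeries m).mul_const (r ^ m))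
    (tendsto_inv_prod_one_sub_pow hr) fun N ↦ ?_
  exact sum_le_hasSum _ (fun m _ ↦ by positivity) (hasSum_coeff_boundedPartsSeries_mul_pow N hr)

theorem hasSum_card_partition_mul_pow {z : 𝕜} (hz : ‖z‖ < 1) :
    HasSum (fun m : ℕ ↦ (Fintype.card (Nat.Partition m) : 𝕜) * z ^ m) (eulerFunction z)⁻¹ := by
  have hsummable := summable_card_partition_mul_pow (norm_nonneg z) hz
  have hlim : Tendsto (fun N ↦ ∑' m : ℕ, ((coeff m (boundedPartsSeries N) : ℕ) : 𝕜) * z ^ m) atTop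
      (𝓝 (∑' m : ℕ, (Fintype.card (Nat.Partition m) : 𝕜) * z ^ m)) := by
    refine tendsto_tsum_of_dominated_convergence hsummable
      (fun m ↦ (tendsto_natCast_coeff_boundedPartsSeries m).mul_const _) (.of_forall fun N m ↦ ?_)
    rw [norm_mul, norm_pow, RCLike.norm_natCast]
    gcongr
    exact coeff_boundedPartsSeries_le N m
  simp only [(hasSum_coeff_boundedPartsSeries_mul_pow _ hz).tsum_eq] at hlim
  rw [tendsto_nhds_unique (tendsto_inv_prod_one_sub_pow hz) hlim]
  refine (Summable.of_norm ?_).hasSum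
  simpa using hsummable

end EulerProduct

section CauchyFormula

lemma integral_exp_int_mul_I (k : ℤ) :
    ∫ θ : ℝ in -π..π, cexp (k * I * θ) = if k = 0 then 2 * (π : ℂ) else 0 := by
  split_ifs with hk
  · simp [hk, two_mul]
  · have hperiod : cexp (k * I * (π : ℝ)) = cexp (k * I * (-π : ℝ)) :=
      Complex.exp_eq_exp_iff_exists_int.mpr ⟨k, by push_cast; ring⟩
    rw [integral_exp_mul_complex (by simp [hk]), hperiod, sub_self, zero_div]

lemma integral_monomial_mul_exp (a : ℂ) (m n : ℕ) (σ : ℝ) :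
    ∫ θ : ℝ in -π..π, a * cexp (-(σ + θ * I)) ^ m * cexp (n * (σ + θ * I)) =
      if m = n then 2 * π * a else 0 := by
  have hintegrand (θ : ℝ) : a * cexp (-(σ + θ * I)) ^ m * cexp (n * (σ + θ * I)) =
      a * cexp (((n : ℂ) - m) * σ) * cexp (((n - m : ℤ) : ℂ) * I * θ) := by
    rw [← Complex.exp_nat_mul, mul_assoc, mul_assoc, ← Complex.exp_add, ← Complex.exp_add]
    congr 2
    push_cast
    ring
  simp only [hintegrand, intervalIntegral.integral_const_mul, integral_exp_int_mul_I,
    sub_eq_zero, Nat.cast_inj, eq_comm (a := n)]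
  split_ifs with hmn
  · simp [hmn, mul_comm]
  · simp

theorem integral_powerSeries_mul_exp {a : ℕ → ℂ} {f : ℂ → ℂ} {σ : ℝ}
    (ha : Summable fun m ↦ ‖a m‖ * rexp (-σ) ^ m)
    (hf : ∀ z, ‖z‖ = rexp (-σ) → HasSum (fun m ↦ a m * z ^ m) (f z)) (n : ℕ) :
    ∫ θ : ℝ in -π..π, f (cexp (-(σ + θ * I))) * cexp (n * (σ + θ * I)) = 2 * π * a n := by
  have hnorm (θ : ℝ) : ‖cexp (-(σ + θ * I))‖ = rexp (-σ) := by simp [Complex.norm_exp]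
  have hterms : HasSum
      (fun m ↦ ∫ θ : ℝ in -π..π, a m * cexp (-(σ + θ * I)) ^ m * cexp (n * (σ + θ * I)))
      (∫ θ : ℝ in -π..π, f (cexp (-(σ + θ * I))) * cexp (n * (σ + θ * I))) := by
    refine intervalIntegral.hasSum_integral_of_dominated_convergence
      (fun m _ ↦ ‖a m‖ * rexp (-σ) ^ m * rexp (n * σ))
      (fun m ↦ Continuous.aestronglyMeasurable (by fun_prop))
      (fun m ↦ .of_forall fun θ _ ↦ ?_) (.of_forall fun θ _ ↦ ha.mul_right _)
      intervalIntegrable_const (.of_forall fun θ _ ↦ (hf _ (hnorm θ)).mul_right _)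
    simp [Complex.norm_exp]
  simp only [integral_monomial_mul_exp] at hterms
  simpa using hterms.unique (hasSum_single n fun m hm ↦ if_neg hm)

end CauchyFormula

section ModularTransformation

lemma csqrt_mul {a b : ℂ} (ha : a ≠ 0) (hb : b ≠ 0) (hab : a.arg + b.arg ∈ Set.Ioc (-π) π) :
    Complex.sqrt (a * b) = Complex.sqrt a * Complex.sqrt b := by
  simp only [Complex.sqrt, Complex.cpow_def_of_ne_zero, ha, hb, mul_ne_zero, ne_eq,
    not_false_eq_true, Complex.log_mul ha hb hab, add_mul, Complex.exp_add]

lemma csqrt_I_mul {w : ℂ} (hw : 0 < w.re) :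
    Complex.sqrt (I * w) = Complex.sqrt I * Complex.sqrt w := by
  have hw0 : w ≠ 0 := by rintro rfl; simp at hw
  have harg : |w.arg| < π / 2 := Complex.abs_arg_lt_pi_div_two_iff.mpr (.inl hw)
  rw [abs_lt] at harg
  refine csqrt_mul Complex.I_ne_zero hw0 ?_
  rw [Complex.arg_I]
  constructor <;> linarith [Real.pi_pos]

lemma csqrt_ofReal_mul {a : ℝ} (ha : 0 < a) {w : ℂ} (hw : w ≠ 0) :
    Complex.sqrt (a * w) = (√a : ℝ) * Complex.sqrt w := by
  rw [csqrt_mul (by exact_mod_cast ha.ne') hw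
    (by simpa [Complex.arg_ofReal_of_nonneg ha.le] using Complex.arg_mem_Ioc w),
    Complex.sqrt_of_nonneg (by exact_mod_cast ha.le), Complex.ofReal_re]

lemma csqrt_sq (z : ℂ) : Complex.sqrt z ^ 2 = z := by
  exact_mod_cast Complex.cpow_nat_inv_pow z two_ne_zero

lemma norm_exp_neg_lt_one {s : ℂ} (hs : 0 < s.re) : ‖cexp (-s)‖ < 1 := by
  simpa [Complex.norm_exp] using hs

lemma eta_eq_exp_mul_eulerFunction (z : ℂ) :
    ModularForm.eta z = cexp (2 * π * I * z / 24) * eulerFunction (cexp (2 * π * I * z)) := by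
  simp [ModularForm.eta, eulerFunction, ModularForm.eta_q, Function.Periodic.qParam]

lemma exp_mul_eulerFunction_exp_neg {s : ℂ} (hs : 0 < s.re) :
    Complex.sqrt (s / (2 * π)) * (cexp (-s / 24) * eulerFunction (cexp (-s))) =
      cexp (-(4 * π ^ 2 / s) / 24) * eulerFunction (cexp (-(4 * π ^ 2 / s))) := by
  have hs0 : s ≠ 0 := by rintro rfl; simp at hs
  have hre : 0 < (s / (2 * π)).re := by
    have : s / (2 * π) = s / ((2 * π : ℝ) : ℂ) := by push_cast; rfl
    rw [this, Complex.div_ofReal_re]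
    positivity
  have hupper : I * (s / (2 * π)) ∈ UpperHalfPlane.upperHalfPlaneSet := by
    simpa [UpperHalfPlane.upperHalfPlaneSet] using hre
  have hleft : 2 * π * I * (-1 / (I * (s / (2 * π)))) = -(4 * π ^ 2 / s) := by
    field_simp
    ring
  have hright : 2 * π * I * (I * (s / (2 * π))) = -s := by
    field_simp
    rw [Complex.I_sq]
  have heta := ModularForm.eta_comp_eq_csqrt_I_inv hupper
  have hsqrtI : Complex.sqrt I ≠ 0 := by simp [Complex.sqrt]
  simp only [Function.comp, Pi.smul_apply, Pi.mul_apply, smul_eq_mul,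
    eta_eq_exp_mul_eulerFunction, csqrt_I_mul hre, hleft, hright] at heta
  rw [heta, mul_assoc, inv_mul_cancel_left₀ hsqrtI]

theorem inv_eulerFunction_exp_neg {s : ℂ} (hs : 0 < s.re) :
    (eulerFunction (cexp (-s)))⁻¹ = Complex.sqrt (s / (2 * π)) *
      cexp (π ^ 2 / (6 * s) - s / 24) * (eulerFunction (cexp (-(4 * π ^ 2 / s))))⁻¹ := by
  have hs0 : s ≠ 0 := by rintro rfl; simp at hs
  have hre : 0 < (4 * π ^ 2 / s).re := by
    have : 4 * (π : ℂ) ^ 2 / s = ((4 * π ^ 2 : ℝ) : ℂ) * s⁻¹ := by push_cast; rfl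
    rw [this, Complex.re_ofReal_mul, Complex.inv_re]
    have := Complex.normSq_pos.mpr hs0
    positivity
  have hφ := eulerFunction_ne_zero (norm_exp_neg_lt_one hs)
  have hφ' := eulerFunction_ne_zero (norm_exp_neg_lt_one hre)
  have hexp : cexp (π ^ 2 / (6 * s) - s / 24) =
      (cexp (-(4 * π ^ 2 / s) / 24))⁻¹ * cexp (-s / 24) := by
    rw [← Complex.exp_neg, ← Complex.exp_add]
    congr 1
    field_simp
    ring
  rw [hexp, ← div_eq_mul_inv, eq_div_iff hφ', inv_mul_eq_iff_eq_mul₀ hφ]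
  linear_combination -(cexp (-(4 * π ^ 2 / s) / 24))⁻¹ *
    exp_mul_eulerFunction_exp_neg hs - eulerFunction (cexp (-(4 * π ^ 2 / s))) *
      inv_mul_cancel₀ (Complex.exp_ne_zero (-(4 * π ^ 2 / s) / 24))

end ModularTransformation

section MinorArc

lemma one_sub_norm_mul_exp_le_norm_one_sub {w : ℂ} (hw : ‖w‖ < 1) :
    (1 - ‖w‖) * rexp (‖w‖ - w.re) ≤ ‖1 - w‖ := by
  have hne : 1 - w ≠ 0 := by
    rw [sub_ne_zero]
    rintro rfl
    simp at hw
  have hlog : HasSum (fun n : ℕ ↦ (w ^ (n + 1) / ((n + 1 : ℕ) : ℂ)).re)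
      (-Real.log ‖1 - w‖) := by
    have := Complex.hasSum_re (Complex.hasSum_taylorSeries_neg_log hw)
    simpa [Complex.log_re] using (hasSum_nat_add_iff' 1).mpr this
  have hlognorm := Real.hasSum_pow_div_log_of_abs_lt_one (x := ‖w‖) (by simpa using hw)
  have hterm (n : ℕ) : (w ^ (n + 1) / ((n + 1 : ℕ) : ℂ)).re ≤ ‖w‖ ^ (n + 1) / (n + 1) := by
    refine (Complex.re_le_norm _).trans_eq ?_
    rw [norm_div, norm_pow, Complex.norm_natCast, Nat.cast_succ]
  -- All terms of the difference of the two logarithmic series are nonnegative, so the sum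
  -- dominates the term of index one.
  have hlog_le : Real.log (1 - ‖w‖) + (‖w‖ - w.re) ≤ Real.log ‖1 - w‖ := by
    have hfirst : ‖w‖ - w.re ≤ -Real.log (1 - ‖w‖) - -Real.log ‖1 - w‖ := by
      simpa using le_hasSum (hlognorm.sub hlog) 0 fun n _ ↦ sub_nonneg.mpr (hterm n)
    linarith
  calc (1 - ‖w‖) * rexp (‖w‖ - w.re)
      = rexp (Real.log (1 - ‖w‖) + (‖w‖ - w.re)) := by
        rw [Real.exp_add, Real.exp_log (sub_pos.mpr hw)]
    _ ≤ rexp (Real.log ‖1 - w‖) := Real.exp_le_exp.mpr hlog_le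
    _ = ‖1 - w‖ := Real.exp_log (norm_pos_iff.mpr hne)

lemma hasSum_pow_succ {K : Type*} [NormedDivisionRing K] {z : K} (hz : ‖z‖ < 1) :
    HasSum (fun k : ℕ ↦ z ^ (k + 1)) ((1 - z)⁻¹ - 1) := by
  simpa using (hasSum_nat_add_iff' (f := (z ^ ·)) 1).mpr (hasSum_geometric_of_norm_lt_one hz)

theorem eulerFunction_norm_mul_exp_le_norm_eulerFunction {z : ℂ} (hz : ‖z‖ < 1) :
    eulerFunction ‖z‖ * rexp ((1 - ‖z‖)⁻¹ - ((1 - z)⁻¹).re) ≤ ‖eulerFunction z‖ := by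
  have hr : ‖‖z‖‖ < 1 := by rwa [norm_norm]
  have hsum : HasSum (fun k : ℕ ↦ ‖z‖ ^ (k + 1) - (z ^ (k + 1)).re)
      ((1 - ‖z‖)⁻¹ - ((1 - z)⁻¹).re) := by
    simpa using (hasSum_pow_succ hr).sub (Complex.hasSum_re (hasSum_pow_succ hz))
  refine le_of_tendsto_of_tendsto'
    ((hasProd_eulerFunction hr).tendsto_prod_nat.mul hsum.tendsto_sum_nat.rexp)
    (hasProd_eulerFunction hz).tendsto_prod_nat.norm fun N ↦ ?_
  rw [norm_prod, Real.exp_sum, ← Finset.prod_mul_distrib]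
  refine Finset.prod_le_prod (fun k _ ↦ ?_) fun k _ ↦ ?_
  · have := norm_pow_succ_lt_one hr k
    rw [Real.norm_of_nonneg (by positivity)] at this
    exact mul_nonneg (sub_nonneg.mpr this.le) (Real.exp_pos _).le
  · simpa using one_sub_norm_mul_exp_le_norm_one_sub (norm_pow_succ_lt_one hz k)

lemma eulerFunction_pos {r : ℝ} (hr0 : 0 ≤ r) (hr1 : r < 1) : 0 < eulerFunction r := by
  have hr : ‖r‖ < 1 := by rwa [Real.norm_of_nonneg hr0]
  refine lt_of_le_of_ne (ge_of_tendsto' (hasProd_eulerFunction hr).tendsto_prod_nat fun N ↦ ?_)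
    (eulerFunction_ne_zero hr).symm
  exact Finset.prod_nonneg fun k _ ↦ sub_nonneg.mpr (pow_le_one₀ hr0 hr1.le)

lemma eulerFunction_ofReal {r : ℝ} (hr : ‖r‖ < 1) :
    eulerFunction (r : ℂ) = (eulerFunction r : ℝ) := by
  have hprod := (hasProd_eulerFunction hr).map Complex.ofRealHom Complex.continuous_ofReal
  simpa [eulerFunction, Function.comp_def] using hprod.tprod_eq

lemma norm_eulerFunction_exp_neg_ofReal {σ : ℝ} (hσ : 0 < σ) :
    ‖eulerFunction (cexp (-σ))‖ = eulerFunction (rexp (-σ)) := by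
  have hr : ‖rexp (-σ)‖ < 1 := by simpa using hσ
  have hpos := eulerFunction_pos (Real.exp_pos (-σ)).le (by simpa using hσ)
  rw [← Complex.ofReal_neg, ← Complex.ofReal_exp, eulerFunction_ofReal hr, Complex.norm_real,
    Real.norm_of_nonneg hpos.le]

lemma norm_one_sub_exp_sq (σ θ : ℝ) :
    ‖1 - cexp (-(σ + θ * I))‖ ^ 2 =
      (1 - rexp (-σ)) ^ 2 + 2 * rexp (-σ) * (1 - Real.cos θ) := by
  have hre : (1 - cexp (-(σ + θ * I))).re = 1 - rexp (-σ) * Real.cos θ := by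
    simp [Complex.exp_re]
  have him : (1 - cexp (-(σ + θ * I))).im = rexp (-σ) * Real.sin θ := by
    simp [Complex.exp_im]
  rw [← Complex.normSq_eq_norm_sq, Complex.normSq_apply, hre, him]
  linear_combination rexp (-σ) ^ 2 * Real.sin_sq_add_cos_sq θ

variable {σ θ : ℝ}

lemma one_sub_exp_le_norm_one_sub_exp (hr : 1 / 2 ≤ rexp (-σ)) (hσθ : σ ≤ |θ|) (hθ : |θ| ≤ π) :
    12 / 11 * (1 - rexp (-σ)) ≤ ‖1 - cexp (-(σ + θ * I))‖ := by
  rcases lt_or_ge 1 (rexp (-σ)) with h1 | h1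
  · linarith [norm_nonneg (1 - cexp (-(σ + θ * I)))]
  have hcos : 1 / 5 * (1 - rexp (-σ)) ^ 2 ≤ 1 - Real.cos θ :=
    calc 1 / 5 * (1 - rexp (-σ)) ^ 2 ≤ 2 / π ^ 2 * |θ| ^ 2 := by
          have hπ : 1 / 5 ≤ 2 / π ^ 2 := by
            rw [div_le_div_iff₀ (by norm_num) (by positivity)]
            nlinarith [Real.pi_lt_d2, Real.pi_pos]
          gcongr
          linarith [Real.add_one_le_exp (-σ)]
      _ ≤ 1 - Real.cos θ := by
          rw [sq_abs]
          linarith [Real.cos_le_one_sub_mul_cos_sq hθ]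
  refine le_of_sq_le_sq ?_ (norm_nonneg _)
  rw [norm_one_sub_exp_sq]
  -- The constant `12 / 11` works because `(12 / 11) ^ 2 ≤ 1 + 1 / 5`.
  nlinarith [mul_le_mul_of_nonneg_left hcos (by linarith : 0 ≤ 2 * rexp (-σ)),
    mul_nonneg (sq_nonneg (1 - rexp (-σ))) (sub_nonneg.mpr hr)]

lemma one_div_le_inv_sub_re_inv (hσ : 0 < σ) (hr : 1 / 2 ≤ rexp (-σ)) (hσθ : σ ≤ |θ|)
    (hθ : |θ| ≤ π) :
    1 / (12 * σ) ≤ (1 - rexp (-σ))⁻¹ - ((1 - cexp (-(σ + θ * I)))⁻¹).re := by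
  have hpos : 0 < 1 - rexp (-σ) := by simpa using hσ
  have hre : ((1 - cexp (-(σ + θ * I)))⁻¹).re ≤ (12 / 11 * (1 - rexp (-σ)))⁻¹ := by
    refine (Complex.re_le_norm _).trans ?_
    rw [norm_inv]
    exact inv_anti₀ (by positivity) (one_sub_exp_le_norm_one_sub_exp hr hσθ hθ)
  calc 1 / (12 * σ) ≤ 1 / (12 * (1 - rexp (-σ))) := by
        gcongr
        linarith [Real.add_one_le_exp (-σ)]
    _ = (1 - rexp (-σ))⁻¹ - (12 / 11 * (1 - rexp (-σ)))⁻¹ := by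
        field_simp
        norm_num
    _ ≤ _ := by gcongr

theorem norm_inv_eulerFunction_exp_neg_le (hσ : 0 < σ) (hr : 1 / 2 ≤ rexp (-σ))
    (hσθ : σ ≤ |θ|) (hθ : |θ| ≤ π) :
    ‖(eulerFunction (cexp (-(σ + θ * I))))⁻¹‖ ≤
      ‖(eulerFunction (cexp (-σ)))⁻¹‖ * rexp (-(1 / (12 * σ))) := by
  have hnorm : ‖cexp (-(σ + θ * I))‖ = rexp (-σ) := by simp [Complex.norm_exp]
  have hφ : 0 < eulerFunction (rexp (-σ)) :=
    eulerFunction_pos (Real.exp_pos _).le (by simpa using hσ)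
  rw [norm_inv, norm_inv, norm_eulerFunction_exp_neg_ofReal hσ, Real.exp_neg (1 / (12 * σ)),
    ← mul_inv]
  refine inv_anti₀ (by positivity) ?_
  calc eulerFunction (rexp (-σ)) * rexp (1 / (12 * σ))
      ≤ eulerFunction (rexp (-σ)) *
          rexp ((1 - rexp (-σ))⁻¹ - ((1 - cexp (-(σ + θ * I)))⁻¹).re) := by
        gcongr
        exact one_div_le_inv_sub_re_inv hσ hr hσθ hθ
    _ ≤ ‖eulerFunction (cexp (-(σ + θ * I)))‖ := by
        simpa only [hnorm] using eulerFunction_norm_mul_exp_le_norm_eulerFunction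
          (norm_exp_neg_lt_one (s := σ + θ * I) (by simpa using hσ))

end MinorArc

section DominatedConvergence

open MeasureTheory

lemma tendsto_integral_neg_self_of_dominated {ι E : Type*} [NormedAddCommGroup E]
    [NormedSpace ℝ E] {l : Filter ι} [l.IsCountablyGenerated] {F : ι → ℝ → E} {f : ℝ → E}
    {R : ι → ℝ} (bound : ℝ → ℝ) (hR : Tendsto R l atTop)
    (hmeas : ∀ᶠ i in l, AEStronglyMeasurable (F i))
    (hbound : ∀ᶠ i in l, ∀ v, |v| ≤ R i → ‖F i v‖ ≤ bound v) (hint : Integrable bound)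
    (hlim : ∀ v, Tendsto (fun i ↦ F i v) l (𝓝 (f v))) :
    Tendsto (fun i ↦ ∫ v in -R i..R i, F i v) l (𝓝 (∫ v, f v)) := by
  have hindicator : Tendsto (fun i ↦ ∫ v, (Set.Ioc (-R i) (R i)).indicator (F i) v) l
      (𝓝 (∫ v, f v)) := by
    refine tendsto_integral_filter_of_dominated_convergence (fun v ↦ ‖bound v‖) ?_ ?_ hint.norm
      (.of_forall fun v ↦ ?_)
    · filter_upwards [hmeas] with i hi using hi.indicator measurableSet_Ioc
    · filter_upwards [hbound] with i hi
      refine .of_forall fun v ↦ ?_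
      by_cases hv : v ∈ Set.Ioc (-R i) (R i)
      · rw [Set.indicator_of_mem hv]
        exact (hi v (abs_le.mpr ⟨hv.1.le, hv.2⟩)).trans (le_abs_self _)
      · simp [Set.indicator_of_notMem hv]
    · refine (hlim v).congr' ?_
      filter_upwards [hR.eventually_gt_atTop |v|] with i hi
      rw [abs_lt] at hi
      rw [Set.indicator_of_mem (Set.mem_Ioc.mpr ⟨hi.1, hi.2.le⟩)]
  refine hindicator.congr' ?_
  filter_upwards [hR.eventually_ge_atTop 0] with i hi
  rw [intervalIntegral.integral_of_le (by linarith), integral_indicator measurableSet_Ioc]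

end DominatedConvergence

section SaddlePoint

/-- The saddle point `s = π² / (6L)` on the positive axis of `exp (π² / (6s) + n s)`, the dominant
part of the integrand in Cauchy's formula. The parameter is `L = π √(n / 6)`, the common value of
`π² / (6s)` and `n s` at the saddle point. -/
noncomputable def saddlePoint (L : ℝ) : ℝ := π ^ 2 / (6 * L)

/-- The point `1 + i v / √L`. The contour of integration is `v ↦ saddlePoint L * contourPoint L v`;
the factor `1 / √L` is the width of the peak of the integrand. -/
noncomputable def contourPoint (L v : ℝ) : ℂ := 1 + (v / √L : ℝ) * I

/-- The value of `v` at which the contour reaches imaginary part `π`. -/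
noncomputable def contourRadius (L : ℝ) : ℝ := π * √L / saddlePoint L

/-- The integrand of Cauchy's formula along the contour, divided by its approximate value
`√(s / 2π) * exp (2L)` at the saddle point. -/
noncomputable def saddleIntegrand (L v : ℝ) : ℂ :=
  (eulerFunction (cexp (-(saddlePoint L * contourPoint L v))))⁻¹ *
    cexp (L * contourPoint L v - 2 * L) / (√(saddlePoint L / (2 * π)) : ℝ)

variable {L : ℝ}

lemma saddlePoint_pos (hL : 0 < L) : 0 < saddlePoint L := by
  unfold saddlePoint
  positivity

@[simp]
lemma contourPoint_re (L v : ℝ) : (contourPoint L v).re = 1 := by simp [contourPoint]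

lemma contourPoint_zero (L : ℝ) : contourPoint L 0 = 1 := by simp [contourPoint]

lemma contourPoint_ne_zero (L v : ℝ) : contourPoint L v ≠ 0 := fun h ↦ by
  simpa [h] using contourPoint_re L v

lemma normSq_contourPoint (hL : 0 ≤ L) (v : ℝ) :
    Complex.normSq (contourPoint L v) = 1 + v ^ 2 / L := by
  rw [Complex.normSq_apply]
  simp [contourPoint, ← sq, div_pow, Real.sq_sqrt hL]

lemma continuous_contourPoint (L : ℝ) : Continuous (contourPoint L) := by
  unfold contourPoint
  fun_prop

lemma saddlePoint_mul_contourPoint (L v : ℝ) :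
    saddlePoint L * contourPoint L v = saddlePoint L + (saddlePoint L / √L * v : ℝ) * I := by
  simp only [contourPoint]
  push_cast
  ring

lemma norm_exp_neg_saddlePoint_mul_lt_one (hL : 0 < L) (v : ℝ) :
    ‖cexp (-(saddlePoint L * contourPoint L v))‖ < 1 :=
  norm_exp_neg_lt_one (by simpa [Complex.re_ofReal_mul] using saddlePoint_pos hL)

lemma continuousAt_eulerFunction {q : ℂ} (hq : ‖q‖ < 1) : ContinuousAt eulerFunction q :=
  (ModularForm.differentiableOn_tprod_one_sub_pow.differentiableAt
    (Metric.isOpen_ball.mem_nhds (by simpa using hq))).continuousAt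

lemma tendsto_inv_eulerFunction_nhds_zero :
    Tendsto (fun q : ℂ ↦ (eulerFunction q)⁻¹) (𝓝 0) (𝓝 1) := by
  have hzero : eulerFunction (0 : ℂ) = 1 := by simp [eulerFunction]
  simpa [hzero] using
    (continuousAt_eulerFunction (q := 0) (by simp)).tendsto.inv₀ (by simp [hzero])

lemma continuous_saddleIntegrand (hL : 0 < L) : Continuous (saddleIntegrand L) := by
  have hw := continuous_contourPoint L
  have hφ : Continuous fun v ↦ eulerFunction (cexp (-(saddlePoint L * contourPoint L v))) :=
    continuous_iff_continuousAt.mpr fun v ↦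
      (continuousAt_eulerFunction (norm_exp_neg_saddlePoint_mul_lt_one hL v)).comp
        (f := fun v ↦ cexp (-(saddlePoint L * contourPoint L v))) (by fun_prop)
  have hφ0 v := eulerFunction_ne_zero (norm_exp_neg_saddlePoint_mul_lt_one hL v)
  exact ((hφ.inv₀ hφ0).mul (by fun_prop)).div_const _

lemma mul_inv_contourPoint_add (hL : 0 < L) (v : ℝ) :
    L * (contourPoint L v)⁻¹ + L * contourPoint L v - 2 * L =
      -((v ^ 2 : ℝ) * (contourPoint L v)⁻¹) := by
  have hsq : (L : ℂ) * (contourPoint L v - 1) ^ 2 = -(v : ℂ) ^ 2 := by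
    have hsqrt : (√L : ℂ) ^ 2 = L := by rw [← Complex.ofReal_pow, Real.sq_sqrt hL.le]
    have hL0 : (L : ℂ) ≠ 0 := by exact_mod_cast hL.ne'
    simp only [contourPoint, add_sub_cancel_left, mul_pow, Complex.I_sq, Complex.ofReal_div,
      div_pow, hsqrt]
    field_simp
  have hw := contourPoint_ne_zero L v
  field_simp
  push_cast
  linear_combination hsq

lemma exp_mul_exp_contourPoint_eq (hL : 0 < L) (v : ℝ) :
    cexp (π ^ 2 / (6 * (saddlePoint L * contourPoint L v)) -
        saddlePoint L * contourPoint L v / 24) * cexp (L * contourPoint L v - 2 * L) =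
      cexp (-((v ^ 2 : ℝ) * (contourPoint L v)⁻¹)) *
        cexp (-((saddlePoint L / 24 : ℝ) * contourPoint L v)) := by
  have hpeak : (π : ℂ) ^ 2 / (6 * (saddlePoint L * contourPoint L v)) =
      L * (contourPoint L v)⁻¹ := by
    rw [saddlePoint]
    push_cast
    field_simp
  rw [← Complex.exp_add, ← Complex.exp_add, ← mul_inv_contourPoint_add hL, hpeak]
  push_cast
  ring_nf

theorem saddleIntegrand_eq (hL : 0 < L) (v : ℝ) :
    saddleIntegrand L v = Complex.sqrt (contourPoint L v) *
      cexp (-((v ^ 2 : ℝ) * (contourPoint L v)⁻¹)) *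
      cexp (-((saddlePoint L / 24 : ℝ) * contourPoint L v)) *
      (eulerFunction (cexp (-((24 * L : ℝ) * (contourPoint L v)⁻¹))))⁻¹ := by
  have hs := saddlePoint_pos hL
  have hw := contourPoint_ne_zero L v
  have hscale : 0 < saddlePoint L / (2 * π) := by positivity
  have hsqrt : ((√(saddlePoint L / (2 * π)) : ℝ) : ℂ) ≠ 0 := by
    exact_mod_cast (Real.sqrt_pos.mpr hscale).ne'
  have hdiv : saddlePoint L * contourPoint L v / (2 * π) =
      (saddlePoint L / (2 * π) : ℝ) * contourPoint L v := by
    push_cast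
    ring
  have hdual : 4 * (π : ℂ) ^ 2 / (saddlePoint L * contourPoint L v) =
      (24 * L : ℝ) * (contourPoint L v)⁻¹ := by
    rw [saddlePoint]
    push_cast
    field_simp
    ring
  rw [saddleIntegrand, inv_eulerFunction_exp_neg (by simpa [Complex.re_ofReal_mul] using hs),
    hdiv, csqrt_ofReal_mul hscale hw, hdual, div_eq_iff hsqrt]
  linear_combination ((√(saddlePoint L / (2 * π)) : ℝ) : ℂ) * Complex.sqrt (contourPoint L v) *
    (eulerFunction (cexp (-((24 * L : ℝ) * (contourPoint L v)⁻¹))))⁻¹ *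
      exp_mul_exp_contourPoint_eq hL v

lemma half_le_re_inv_contourPoint (hL : 0 < L) {v : ℝ} (hv : |v| ≤ √L) :
    1 / 2 ≤ ((contourPoint L v)⁻¹).re := by
  have hv2 : v ^ 2 / L ≤ 1 := (div_le_one hL).mpr (Real.sqrt_le_sqrt_iff hL.le |>.mp
    (by rwa [Real.sqrt_sq_eq_abs]))
  rw [Complex.inv_re, contourPoint_re, normSq_contourPoint hL.le]
  gcongr
  linarith

lemma norm_csqrt_contourPoint_le (hL : 0 < L) {v : ℝ} (hv : |v| ≤ √L) :
    ‖Complex.sqrt (contourPoint L v)‖ ≤ 2 := by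
  have hw : ‖contourPoint L v‖ ≤ 2 :=
    calc ‖contourPoint L v‖ ≤ 1 + |v| / √L := by
          simpa [contourPoint, abs_of_nonneg] using norm_add_le (1 : ℂ) ((v / √L : ℝ) * I)
      _ ≤ 1 + 1 := by
          gcongr
          exact (div_le_one (Real.sqrt_pos.mpr hL)).mpr hv
      _ = 2 := by norm_num
  refine le_of_sq_le_sq ?_ zero_le_two
  rw [← norm_pow, csqrt_sq]
  linarith

theorem eventually_norm_saddleIntegrand_le_of_majorArc :
    ∀ᶠ L in atTop, ∀ v, |v| ≤ √L → ‖saddleIntegrand L v‖ ≤ 4 * rexp (-(v ^ 2 / 2)) := by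
  have hφ : ∀ᶠ q : ℂ in 𝓝 0, ‖(eulerFunction q)⁻¹‖ < 2 :=
    tendsto_inv_eulerFunction_nhds_zero.norm.eventually_lt_const (by simp)
  obtain ⟨δ, hδ, hball⟩ := Metric.eventually_nhds_iff.mp hφ
  have hdecay : Tendsto (fun L : ℝ ↦ rexp (-(12 * L))) atTop (𝓝 0) :=
    Real.tendsto_exp_neg_atTop_nhds_zero.comp (tendsto_id.const_mul_atTop (by norm_num))
  filter_upwards [hdecay.eventually_lt_const hδ, eventually_gt_atTop 0] with L hLδ hL v hv
  have hre := half_le_re_inv_contourPoint hL hv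
  have hgauss : ‖cexp (-((v ^ 2 : ℝ) * (contourPoint L v)⁻¹))‖ ≤ rexp (-(v ^ 2 / 2)) := by
    rw [Complex.norm_exp, Complex.neg_re, Complex.re_ofReal_mul, div_eq_mul_one_div]
    gcongr
  have hshift : ‖cexp (-((saddlePoint L / 24 : ℝ) * contourPoint L v))‖ ≤ 1 := by
    have := saddlePoint_pos hL
    rw [Complex.norm_exp, Complex.neg_re, Complex.re_ofReal_mul, contourPoint_re,
      Real.exp_le_one_iff]
    linarith
  have hdual : ‖(eulerFunction (cexp (-((24 * L : ℝ) * (contourPoint L v)⁻¹))))⁻¹‖ ≤ 2 := by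
    refine (hball ?_).le
    rw [dist_zero_right, Complex.norm_exp, Complex.neg_re, Complex.re_ofReal_mul]
    refine (Real.exp_le_exp.mpr ?_).trans_lt hLδ
    nlinarith
  rw [saddleIntegrand_eq hL, norm_mul, norm_mul, norm_mul]
  calc _ ≤ 2 * rexp (-(v ^ 2 / 2)) * 1 * 2 := by
        gcongr
        exact norm_csqrt_contourPoint_le hL hv
    _ = _ := by ring

lemma norm_saddleIntegrand (L v : ℝ) :
    ‖saddleIntegrand L v‖ = ‖(eulerFunction (cexp (-(saddlePoint L * contourPoint L v))))⁻¹‖ *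
      (rexp (-L) / √(saddlePoint L / (2 * π))) := by
  have hre : (L * contourPoint L v - 2 * L).re = -L := by
    simp only [Complex.sub_re, Complex.mul_re, Complex.ofReal_re, contourPoint_re, mul_one,
      Complex.ofReal_im, zero_mul, sub_zero, Complex.re_ofNat, Complex.im_ofNat, mul_zero]
    ring
  rw [saddleIntegrand, norm_div, norm_mul, Complex.norm_exp, Complex.norm_real,
    Real.norm_of_nonneg (Real.sqrt_nonneg _), hre, mul_div_assoc]

lemma half_le_exp_neg_saddlePoint (hL : 4 ≤ L) : 1 / 2 ≤ rexp (-saddlePoint L) := by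
  have hs : saddlePoint L ≤ 1 / 2 := by
    rw [saddlePoint, div_le_div_iff₀ (by positivity) (by norm_num)]
    nlinarith [Real.pi_lt_d2, Real.pi_pos]
  linarith [Real.add_one_le_exp (-saddlePoint L)]

lemma norm_saddleIntegrand_le_of_minorArc (hL : 4 ≤ L) {v : ℝ} (hv : √L ≤ |v|)
    (hv' : |v| ≤ contourRadius L) :
    ‖saddleIntegrand L v‖ ≤ ‖saddleIntegrand L 0‖ * rexp (-(L / (2 * π ^ 2))) := by
  have hL0 : 0 < L := by linarith
  have hs := saddlePoint_pos hL0
  have hsqrt := Real.sqrt_pos.mpr hL0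
  have habs : |saddlePoint L / √L * v| = saddlePoint L / √L * |v| := by
    rw [abs_mul, abs_of_pos (by positivity)]
  have hlow : saddlePoint L ≤ |saddlePoint L / √L * v| := by
    rw [habs, div_mul_eq_mul_div, le_div_iff₀ hsqrt]
    gcongr
  have hhigh : |saddlePoint L / √L * v| ≤ π := by
    rw [habs, div_mul_eq_mul_div, div_le_iff₀ hsqrt, mul_comm]
    exact (le_div_iff₀ hs).mp hv'
  have hrate : 1 / (12 * saddlePoint L) = L / (2 * π ^ 2) := by
    rw [saddlePoint]
    field_simp
    norm_num
  have hminor := norm_inv_eulerFunction_exp_neg_le hs (half_le_exp_neg_saddlePoint hL) hlow hhigh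
  rw [← saddlePoint_mul_contourPoint, hrate] at hminor
  rw [norm_saddleIntegrand, norm_saddleIntegrand, contourPoint_zero, mul_one, mul_right_comm]
  gcongr

lemma sq_contourRadius_le (hL : 0 < L) : contourRadius L ^ 2 ≤ 4 * L ^ 3 := by
  have hsq : contourRadius L ^ 2 = 36 * L ^ 3 / π ^ 2 := by
    rw [contourRadius, saddlePoint, div_pow, mul_pow, Real.sq_sqrt hL.le]
    field_simp
    norm_num
  rw [hsq, div_le_iff₀ (by positivity)]
  have hπ : 9 ≤ π ^ 2 := by nlinarith [Real.pi_gt_three]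
  nlinarith [pow_pos hL 3]

lemma eventually_mul_pow_le_exp {b : ℝ} (hb : 0 < b) (c : ℝ) (k : ℕ) :
    ∀ᶠ L in atTop, c * L ^ k ≤ rexp (b * L) := by
  have hlittle := (isLittleO_pow_exp_pos_mul_atTop (k := k) hb).const_mul_left c
  filter_upwards [hlittle.bound one_pos] with L hL
  simpa using (le_abs_self _).trans hL

theorem eventually_norm_saddleIntegrand_le :
    ∀ᶠ L in atTop, ∀ v, |v| ≤ contourRadius L → ‖saddleIntegrand L v‖ ≤ 8 * (1 + v ^ 2)⁻¹ := by
  filter_upwards [eventually_norm_saddleIntegrand_le_of_majorArc, eventually_ge_atTop 4,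
    eventually_mul_pow_le_exp (b := 1 / (2 * π ^ 2)) (by positivity) 5 3]
    with L hmajor hL hexp v hvR
  rcases le_total |v| √L with hv | hv
  · calc ‖saddleIntegrand L v‖ ≤ 4 * rexp (-(v ^ 2 / 2)) := hmajor v hv
      _ ≤ 4 * ((1 + v ^ 2) / 2)⁻¹ := by
          rw [Real.exp_neg]
          gcongr
          linarith [Real.add_one_le_exp (v ^ 2 / 2)]
      _ = 8 * (1 + v ^ 2)⁻¹ := by
          rw [inv_div]
          ring
  · have hv2 : 1 + v ^ 2 ≤ rexp (1 / (2 * π ^ 2) * L) :=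
      calc 1 + v ^ 2 ≤ L ^ 3 + 4 * L ^ 3 := by
            gcongr
            · exact one_le_pow₀ (by linarith)
            · rw [← sq_abs]
              exact (pow_le_pow_left₀ (abs_nonneg v) hvR 2).trans
                (sq_contourRadius_le (by linarith))
        _ ≤ rexp (1 / (2 * π ^ 2) * L) := by linarith
    calc ‖saddleIntegrand L v‖
        ≤ ‖saddleIntegrand L 0‖ * rexp (-(L / (2 * π ^ 2))) :=
          norm_saddleIntegrand_le_of_minorArc hL hv hvR
      _ ≤ 8 * rexp (-(1 / (2 * π ^ 2) * L)) := by
          rw [one_div_mul_eq_div]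
          gcongr
          refine (hmajor 0 (by simp)).trans ?_
          norm_num
      _ ≤ 8 * (1 + v ^ 2)⁻¹ := by
          rw [Real.exp_neg]
          gcongr

lemma tendsto_contourPoint (v : ℝ) : Tendsto (fun L ↦ contourPoint L v) atTop (𝓝 1) := by
  have hv : Tendsto (fun L ↦ v / √L) atTop (𝓝 0) :=
    tendsto_const_nhds.div_atTop Real.tendsto_sqrt_atTop
  simpa [contourPoint] using (hv.ofReal.mul_const I).const_add 1

lemma tendsto_saddlePoint : Tendsto saddlePoint atTop (𝓝 0) :=
  tendsto_const_nhds.div_atTop (tendsto_id.const_mul_atTop (by norm_num))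

lemma tendsto_contourRadius : Tendsto contourRadius atTop atTop := by
  have hprod : Tendsto (fun L : ℝ ↦ √L * L * (6 / π)) atTop atTop :=
    (Real.tendsto_sqrt_atTop.atTop_mul_atTop₀ tendsto_id).atTop_mul_const (by positivity)
  refine hprod.congr' ?_
  filter_upwards [eventually_gt_atTop 0] with L hL
  rw [contourRadius, saddlePoint]
  field_simp

lemma tendsto_inv_eulerFunction_dual (v : ℝ) :
    Tendsto (fun L : ℝ ↦ (eulerFunction (cexp (-((24 * L : ℝ) * (contourPoint L v)⁻¹))))⁻¹) atTop
      (𝓝 1) := by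
  refine tendsto_inv_eulerFunction_nhds_zero.comp ?_
  have hre : Tendsto (fun L ↦ ((contourPoint L v)⁻¹).re) atTop (𝓝 1) := by
    simpa [Function.comp_def] using (Complex.continuous_re.tendsto _).comp
      ((tendsto_contourPoint v).inv₀ one_ne_zero)
  rw [tendsto_zero_iff_norm_tendsto_zero]
  simp only [Complex.norm_exp, Complex.neg_re, Complex.re_ofReal_mul]
  exact Real.tendsto_exp_neg_atTop_nhds_zero.comp
    ((tendsto_id.const_mul_atTop (by norm_num)).atTop_mul_pos one_pos hre)

theorem tendsto_saddleIntegrand (v : ℝ) :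
    Tendsto (fun L ↦ saddleIntegrand L v) atTop (𝓝 (rexp (-1 * v ^ 2) : ℝ)) := by
  have hw := tendsto_contourPoint v
  have hsqrt : Tendsto (fun L ↦ Complex.sqrt (contourPoint L v)) atTop (𝓝 1) := by
    simpa [Function.comp_def] using (Complex.continuousAt_sqrt (z := 1) (by simp)).tendsto.comp hw
  have hgauss : Tendsto (fun L ↦ cexp (-((v ^ 2 : ℝ) * (contourPoint L v)⁻¹))) atTop
      (𝓝 (rexp (-1 * v ^ 2) : ℝ)) := by
    simpa using ((hw.inv₀ one_ne_zero).const_mul ((v : ℂ) ^ 2)).neg.cexp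
  have hshift : Tendsto (fun L ↦ cexp (-((saddlePoint L / 24 : ℝ) * contourPoint L v))) atTop
      (𝓝 1) := by
    simpa using ((tendsto_saddlePoint.div_const 24).ofReal.mul hw).neg.cexp
  have hprod := ((hsqrt.mul hgauss).mul hshift).mul (tendsto_inv_eulerFunction_dual v)
  rw [one_mul, mul_one, mul_one] at hprod
  refine hprod.congr' ?_
  filter_upwards [eventually_gt_atTop 0] with L hL using (saddleIntegrand_eq hL v).symm

theorem tendsto_integral_saddleIntegrand :
    Tendsto (fun L ↦ ∫ v in -contourRadius L..contourRadius L, saddleIntegrand L v) atTop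
      (𝓝 (√π : ℝ)) := by
  have hgauss : ∫ v : ℝ, ((rexp (-1 * v ^ 2) : ℝ) : ℂ) = (√π : ℝ) := by
    rw [integral_complex_ofReal, integral_gaussian, div_one]
  rw [← hgauss]
  exact tendsto_integral_neg_self_of_dominated (fun v ↦ 8 * (1 + v ^ 2)⁻¹)
    tendsto_contourRadius
    ((eventually_gt_atTop 0).mono fun L hL ↦
      (continuous_saddleIntegrand hL).aestronglyMeasurable)
    eventually_norm_saddleIntegrand_le (integrable_inv_one_add_sq.const_mul 8)
    tendsto_saddleIntegrand

end SaddlePoint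

section ExactFormula

variable {n : ℕ} {L : ℝ}

theorem integral_inv_eulerFunction_mul_exp (n : ℕ) {σ : ℝ} (hσ : 0 < σ) :
    ∫ θ : ℝ in -π..π, (eulerFunction (cexp (-(σ + θ * I))))⁻¹ * cexp (n * (σ + θ * I)) =
      2 * π * Fintype.card (Nat.Partition n) := by
  have hr : rexp (-σ) < 1 := by simpa using hσ
  refine integral_powerSeries_mul_exp (f := fun z ↦ (eulerFunction z)⁻¹)
    (a := fun m ↦ (Fintype.card (Nat.Partition m) : ℂ)) ?_
    (fun z hz ↦ hasSum_card_partition_mul_pow (hz.trans_lt hr)) n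
  simpa using summable_card_partition_mul_pow (Real.exp_pos _).le hr

lemma natCast_mul_saddlePoint (hL : 0 < L) (hn : (n : ℝ) = 6 * L ^ 2 / π ^ 2) :
    n * saddlePoint L = L := by
  rw [hn, saddlePoint]
  field_simp

lemma inv_eulerFunction_mul_exp_eq_saddleIntegrand (hL : 0 < L)
    (hn : (n : ℝ) = 6 * L ^ 2 / π ^ 2) (v : ℝ) :
    (eulerFunction (cexp (-(saddlePoint L + (saddlePoint L / √L * v : ℝ) * I))))⁻¹ *
        cexp (n * (saddlePoint L + (saddlePoint L / √L * v : ℝ) * I)) =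
      (√(saddlePoint L / (2 * π)) * rexp (2 * L) : ℝ) * saddleIntegrand L v := by
  have hs := saddlePoint_pos hL
  have hscale : ((√(saddlePoint L / (2 * π)) : ℝ) : ℂ) ≠ 0 := by
    exact_mod_cast (Real.sqrt_pos.mpr (by positivity)).ne'
  have hexponent : (n : ℂ) * (saddlePoint L * contourPoint L v) =
      2 * L + (L * contourPoint L v - 2 * L) := by
    have hnC : (n : ℂ) * saddlePoint L = L := by exact_mod_cast natCast_mul_saddlePoint hL hn
    rw [← mul_assoc, hnC]
    ring
  rw [← saddlePoint_mul_contourPoint, hexponent, Complex.exp_add, saddleIntegrand]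
  push_cast
  field_simp

lemma sqrt_saddlePoint_div (hL : 0 < L) :
    √(saddlePoint L / (2 * π)) = √π / (2 * √3 * √L) := by
  refine (Real.sqrt_eq_iff_mul_self_eq_of_pos (by positivity)).mpr ?_
  rw [← sq, div_pow, mul_pow, mul_pow, Real.sq_sqrt Real.pi_pos.le, Real.sq_sqrt zero_le_three,
    Real.sq_sqrt hL.le, saddlePoint]
  field_simp
  norm_num

lemma saddlePoint_div_sqrt_mul_sqrt (hL : 0 < L) (hn : (n : ℝ) = 6 * L ^ 2 / π ^ 2) :
    saddlePoint L / √L * √(saddlePoint L / (2 * π)) = 2 * π / (4 * n * √3 * √π) := by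
  rw [sqrt_saddlePoint_div hL, hn, saddlePoint]
  have hπ := Real.sq_sqrt Real.pi_pos.le
  have hsqrt := Real.sq_sqrt hL.le
  field_simp
  rw [hπ, hsqrt]
  ring

theorem card_partition_eq_mul_integral (hL : 0 < L) (hn : (n : ℝ) = 6 * L ^ 2 / π ^ 2) :
    (Fintype.card (Nat.Partition n) : ℂ) = (1 / (4 * n * √3) * rexp (2 * L) / √π : ℝ) *
      ∫ v in -contourRadius L..contourRadius L, saddleIntegrand L v := by
  have hs := saddlePoint_pos hL
  have hend : saddlePoint L / √L * contourRadius L = π := by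
    rw [contourRadius]
    field_simp
  have hsubst := intervalIntegral.smul_integral_comp_mul_left
    (a := -contourRadius L) (b := contourRadius L)
    (fun θ : ℝ ↦ (eulerFunction (cexp (-(saddlePoint L + θ * I))))⁻¹ *
      cexp (n * (saddlePoint L + θ * I))) (saddlePoint L / √L)
  rw [mul_neg, hend, integral_inv_eulerFunction_mul_exp n hs] at hsubst
  simp only [inv_eulerFunction_mul_exp_eq_saddleIntegrand hL hn,
    intervalIntegral.integral_const_mul] at hsubst
  rw [Complex.real_smul, ← mul_assoc, ← Complex.ofReal_mul, ← mul_assoc,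
    saddlePoint_div_sqrt_mul_sqrt hL hn] at hsubst
  have htwo_pi : (2 * π : ℂ) ≠ 0 := by exact_mod_cast Real.two_pi_pos.ne'
  refine mul_left_cancel₀ htwo_pi (hsubst.symm.trans ?_)
  push_cast
  ring

lemma pi_mul_sqrt_two_mul_div_three (x : ℝ) : π * √(2 * x / 3) = 2 * (π * √(x / 6)) := by
  rw [show 2 * x / 3 = 2 ^ 2 * (x / 6) by ring, Real.sqrt_mul (by norm_num),
    Real.sqrt_sq zero_le_two]
  ring

end ExactFormula

end HardyRamanujan

open HardyRamanujan

/-- **The Hardy–Ramanujan formula**: the number `p(n)` of partitions of `n` satisfies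
`p(n) ∼ (1/(4n√3))·exp(π√(2n/3))` as `n → ∞`. -/
theorem hardy_ramanujan :
    Asymptotics.IsEquivalent atTop
      (fun n : ℕ => (Fintype.card (Nat.Partition n) : ℝ))
      (fun n : ℕ =>
        1 / (4 * n * Real.sqrt 3) * Real.exp (Real.pi * Real.sqrt (2 * n / 3))) := by
  have hL : Tendsto (fun n : ℕ ↦ Real.pi * √((n : ℝ) / 6)) atTop atTop :=
    (Real.tendsto_sqrt_atTop.comp (tendsto_natCast_atTop_atTop.atTop_div_const
      (by norm_num))).const_mul_atTop Real.pi_pos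
  have hratio := (Complex.continuous_re.tendsto _).comp
    ((tendsto_integral_saddleIntegrand.comp hL).div_const ((√Real.pi : ℝ) : ℂ))
  rw [div_self (by exact_mod_cast (Real.sqrt_pos.mpr Real.pi_pos).ne'), Complex.one_re] at hratio
  refine isEquivalent_iff_exists_eq_mul.mpr ⟨_, hratio, ?_⟩
  filter_upwards [eventually_gt_atTop 0] with n hn
  have hformula := card_partition_eq_mul_integral (n := n) (L := Real.pi * √((n : ℝ) / 6))
    (by positivity) (by rw [mul_pow, Real.sq_sqrt (by positivity)]; field_simp)
  have hre := congrArg Complex.re hformula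
  rw [Complex.natCast_re, Complex.re_ofReal_mul, ← pi_mul_sqrt_two_mul_div_three] at hre
  simp only [Pi.mul_apply, Function.comp_apply, Complex.div_ofReal_re]
  rw [hre]
  ring
end

section
/- There exists a constant c₁ with 0 < c₁ < 1 such that, as d → 0⁺, log g(e^{−d}) = ζ(2)/d + (1/2)·log d − (1/2)·log(2π) + O(d^{c₁}); equivalently, g(e^{−d}) = exp(π²/(6d))·√(d/(2π))·(1 + O(d^{c₁})). -/
open Filter Asymptotics Topology

/-- `gR x = ∏_{j≥1} (1 − x^j)⁻¹`, the Euler partition generating function, for `|x| < 1`. -/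
noncomputable def gR (x : ℝ) : ℝ := ∏' j : ℕ, (1 - x ^ (j + 1))⁻¹

/-!
On the imaginary axis the Dedekind eta function is `η(it) = e^{-πt/12} / g(e^{-2πt})`, so the
modular transformation `η(i/t) = √t · η(it)` becomes, with `d = 2πt`, the exact identity
`log g(e^{-d}) = π²/(6d) + (1/2) log d - (1/2) log(2π) - d/24 + log g(e^{-4π²/d})`.
Since `log g(x) = O(x)` at `0`, its last term is exponentially small in `1/d`, and the whole error
is `O(d)`.
-/

section EulerProduct

variable {K : Type*} [NormedField K] {q : K}

lemma summable_norm_neg_pow_succ (hq : ‖q‖ < 1) : Summable fun n : ℕ ↦ ‖-q ^ (n + 1)‖ := by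
  simpa using (summable_nat_add_iff 1).mpr (summable_geometric_of_lt_one (norm_nonneg q) hq)

variable [CompleteSpace K]

lemma multipliable_one_sub_pow_succ (hq : ‖q‖ < 1) :
    Multipliable fun n : ℕ ↦ 1 - q ^ (n + 1) := by
  simpa only [sub_eq_add_neg] using
    multipliable_one_add_of_summable (f := fun n : ℕ ↦ -q ^ (n + 1))
      (summable_norm_neg_pow_succ hq)

lemma tprod_one_sub_pow_succ_ne_zero (hq : ‖q‖ < 1) : ∏' n : ℕ, (1 - q ^ (n + 1)) ≠ 0 := by
  have factor_ne_zero (n : ℕ) : 1 + -q ^ (n + 1) ≠ 0 := by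
    intro h
    have hpow : q ^ (n + 1) = 1 := by linear_combination -h
    exact (pow_lt_one₀ (norm_nonneg q) hq n.succ_ne_zero).ne (by rw [← norm_pow, hpow, norm_one])
  simpa only [sub_eq_add_neg] using
    tprod_one_add_ne_zero_of_summable factor_ne_zero (summable_norm_neg_pow_succ hq)

end EulerProduct

section GeneratingFunction

variable {x : ℝ}

lemma gR_eq_inv_tprod (hx : |x| < 1) : gR x = (∏' n : ℕ, (1 - x ^ (n + 1)))⁻¹ :=
  (multipliable_one_sub_pow_succ (q := x) hx).tprod_inv₀ (tprod_one_sub_pow_succ_ne_zero hx)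

lemma gR_ne_zero (hx : |x| < 1) : gR x ≠ 0 := by
  rw [gR_eq_inv_tprod hx]
  exact inv_ne_zero (tprod_one_sub_pow_succ_ne_zero hx)

lemma gR_zero : gR 0 = 1 := by
  simp [gR]

lemma ofReal_gR (hx : |x| < 1) : (gR x : ℂ) = (∏' n : ℕ, (1 - (x : ℂ) ^ (n + 1)))⁻¹ := by
  have ofReal_tprod := (multipliable_one_sub_pow_succ hx).map_tprod Complex.ofRealHom
    Complex.continuous_ofReal
  simp only [Complex.ofRealHom_eq_coe] at ofReal_tprod
  rw [gR_eq_inv_tprod hx, Complex.ofReal_inv, ofReal_tprod]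
  simp only [Complex.ofReal_sub, Complex.ofReal_one, Complex.ofReal_pow]

lemma differentiableAt_gR (hx : |x| < 1) : DifferentiableAt ℝ gR x := by
  have hball : Metric.ball (0 : ℂ) 1 ∈ 𝓝 (x : ℂ) :=
    Metric.isOpen_ball.mem_nhds (by simpa using hx)
  have hcomplex : DifferentiableAt ℂ (fun q : ℂ ↦ (∏' n : ℕ, (1 - q ^ (n + 1)))⁻¹) x :=
    (ModularForm.differentiableOn_tprod_one_sub_pow.differentiableAt hball).fun_inv
      (tprod_one_sub_pow_succ_ne_zero (by simpa using hx))
  refine hcomplex.hasDerivAt.real_of_complex.differentiableAt.congr_of_eventuallyEq ?_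
  filter_upwards [continuous_abs.continuousAt.eventually_lt_const hx] with y hy
  rw [← ofReal_gR hy, Complex.ofReal_re]

lemma log_gR_isBigO_id : (fun x ↦ Real.log (gR x)) =O[𝓝 0] (id : ℝ → ℝ) := by
  have hdiff : DifferentiableAt ℝ (fun x ↦ Real.log (gR x)) 0 :=
    (differentiableAt_gR (by simp)).log (gR_ne_zero (by simp))
  simpa [gR_zero, Function.id_def] using hdiff.isBigO_sub

end GeneratingFunction

section ModularTransformation

lemma csqrt_ofReal_mul {t : ℝ} (ht : 0 ≤ t) (z : ℂ) :
    Complex.sqrt (t * z) = √t * Complex.sqrt z := by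
  rcases ht.eq_or_lt with rfl | ht
  · simp
  rcases eq_or_ne z 0 with rfl | hz
  · simp
  · have ht' : (t : ℂ) ≠ 0 := by exact_mod_cast ht.ne'
    rw [sqrt_eq_exp (mul_ne_zero ht' hz), sqrt_eq_exp hz, Complex.log_ofReal_mul ht hz, add_div,
      Complex.exp_add, Real.sqrt_eq_rpow, Real.rpow_def_of_pos ht]
    push_cast
    ring_nf

lemma qParam_ofReal_mul_I (h t : ℝ) :
    Function.Periodic.qParam h (t * Complex.I) = (Real.exp (-(2 * Real.pi * t / h)) : ℝ) := by
  rw [Function.Periodic.qParam, Complex.ofReal_exp]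
  congr 1
  push_cast
  linear_combination (2 * Real.pi * t / h : ℂ) * Complex.I_sq

variable {t : ℝ}

lemma abs_exp_neg_lt_one (ht : 0 < t) : |Real.exp (-t)| < 1 := by
  rwa [Real.abs_exp, Real.exp_lt_one_iff, neg_lt_zero]

lemma eta_ofReal_mul_I (ht : 0 < t) :
    ModularForm.eta (t * Complex.I) =
      (Real.exp (-(Real.pi * t / 12)) / gR (Real.exp (-(2 * Real.pi * t))) : ℝ) := by
  have hexponent : 2 * Real.pi * t / 24 = Real.pi * t / 12 := by ring
  rw [Complex.ofReal_div, ofReal_gR (abs_exp_neg_lt_one (by positivity)), div_inv_eq_mul]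
  simp only [ModularForm.eta, ModularForm.eta_q, qParam_ofReal_mul_I, div_one, hexponent]

lemma eta_inv_mul_I (ht : 0 < t) :
    ModularForm.eta ((t⁻¹ : ℝ) * Complex.I) = √t * ModularForm.eta (t * Complex.I) := by
  have hmem : (t * Complex.I) ∈ UpperHalfPlane.upperHalfPlaneSet := by
    simpa [UpperHalfPlane.upperHalfPlaneSet] using ht
  have hinv : -1 / (t * Complex.I) = (t⁻¹ : ℝ) * Complex.I := by
    simp [neg_div, mul_comm]
  have hsqrt : Complex.sqrt Complex.I ≠ 0 := by simp [sqrt_eq_exp]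
  have htransform := ModularForm.eta_comp_eq_csqrt_I_inv hmem
  simp only [Function.comp_apply, hinv, Pi.smul_apply, Pi.mul_apply, smul_eq_mul,
    csqrt_ofReal_mul ht.le] at htransform
  rw [htransform]
  field_simp

theorem gR_exp_neg_two_pi_mul (ht : 0 < t) :
    gR (Real.exp (-(2 * Real.pi * t))) =
      √t * Real.exp (Real.pi / 12 * (t⁻¹ - t)) * gR (Real.exp (-(2 * Real.pi * t⁻¹))) := by
  have hg := gR_ne_zero (abs_exp_neg_lt_one (t := 2 * Real.pi * t) (by positivity))
  have hg' := gR_ne_zero (abs_exp_neg_lt_one (t := 2 * Real.pi * t⁻¹) (by positivity))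
  have heta := eta_inv_mul_I ht
  rw [eta_ofReal_mul_I ht, eta_ofReal_mul_I (inv_pos.mpr ht)] at heta
  norm_cast at heta
  have hexp : Real.exp (Real.pi / 12 * (t⁻¹ - t)) =
      Real.exp (-(Real.pi * t / 12)) / Real.exp (-(Real.pi * t⁻¹ / 12)) := by
    rw [← Real.exp_sub]
    ring_nf
  rw [hexp]
  generalize gR (Real.exp (-(2 * Real.pi * t))) = g at *
  generalize gR (Real.exp (-(2 * Real.pi * t⁻¹))) = g' at *
  field_simp at heta ⊢
  linear_combination heta

theorem log_gR_exp_neg {d : ℝ} (hd : 0 < d) :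
    Real.log (gR (Real.exp (-d))) =
      Real.pi ^ 2 / 6 / d + 1 / 2 * Real.log d - 1 / 2 * Real.log (2 * Real.pi) - d / 24 +
        Real.log (gR (Real.exp (-(4 * Real.pi ^ 2 / d)))) := by
  have hmodular := gR_exp_neg_two_pi_mul (t := d / (2 * Real.pi)) (by positivity)
  have hdirect : 2 * Real.pi * (d / (2 * Real.pi)) = d := by field_simp
  have hdual : 2 * Real.pi * (d / (2 * Real.pi))⁻¹ = 4 * Real.pi ^ 2 / d := by field_simp; ring
  rw [hdirect, hdual] at hmodular
  have hg := gR_ne_zero (abs_exp_neg_lt_one (t := 4 * Real.pi ^ 2 / d) (by positivity))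
  rw [hmodular, Real.log_mul (by positivity) hg, Real.log_mul (by positivity) (by positivity),
    Real.log_sqrt (by positivity), Real.log_div (by positivity) (by positivity), Real.log_exp]
  field_simp
  ring

end ModularTransformation

section ErrorTerm

lemma exp_neg_div_isLittleO_rpow {a : ℝ} (ha : 0 < a) (s : ℝ) :
    (fun d : ℝ ↦ Real.exp (-(a / d))) =o[𝓝[>] 0] fun d ↦ d ^ s := by
  refine ((isLittleO_exp_neg_mul_rpow_atTop ha (-s)).comp_tendsto tendsto_inv_nhdsGT_zero).congr'
    (.of_forall fun d ↦ by simp [div_eq_mul_inv]) ?_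
  filter_upwards [self_mem_nhdsWithin] with d (hd : 0 < d)
  simp [Real.inv_rpow hd.le, Real.rpow_neg hd.le]

lemma id_isBigO_rpow_nhdsGT_zero {c : ℝ} (hc : c ≤ 1) :
    (fun d : ℝ ↦ d) =O[𝓝[>] 0] fun d ↦ d ^ c := by
  refine IsBigO.of_bound' ?_
  filter_upwards [Ioo_mem_nhdsGT one_pos] with d ⟨hd, hd'⟩
  rw [Real.norm_of_nonneg hd.le, Real.norm_of_nonneg (Real.rpow_nonneg hd.le c)]
  simpa only [Real.rpow_one] using Real.rpow_le_rpow_of_exponent_ge hd hd'.le hc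

lemma log_gR_exp_neg_div_isBigO_id {a : ℝ} (ha : 0 < a) :
    (fun d : ℝ ↦ Real.log (gR (Real.exp (-(a / d))))) =O[𝓝[>] 0] fun d ↦ d := by
  have hexp : (fun d : ℝ ↦ Real.exp (-(a / d))) =O[𝓝[>] 0] fun d ↦ d := by
    simpa only [Real.rpow_one] using (exp_neg_div_isLittleO_rpow ha 1).isBigO
  exact (log_gR_isBigO_id.comp_tendsto (hexp.trans_tendsto nhdsWithin_le_nhds)).trans hexp

end ErrorTerm

theorem log_euler_product_asymptotics_general {c : ℝ} (hc : c ≤ 1) :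
    (fun d : ℝ ↦
        Real.log (gR (Real.exp (-d))) -
          (Real.pi ^ 2 / 6 / d + (1 / 2) * Real.log d - (1 / 2) * Real.log (2 * Real.pi)))
      =O[𝓝[>] 0] fun d : ℝ ↦ d ^ c := by
  have hlinear : (fun d : ℝ ↦ -(1 / 24) * d) =O[𝓝[>] 0] fun d ↦ d :=
    (isBigO_refl _ _).const_mul_left _
  have hdual := log_gR_exp_neg_div_isBigO_id (a := 4 * Real.pi ^ 2) (by positivity)
  refine ((hlinear.add hdual).trans (id_isBigO_rpow_nhdsGT_zero hc)).congr' ?_ .rfl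
  filter_upwards [self_mem_nhdsWithin] with d hd
  rw [log_gR_exp_neg hd]
  ring

/-- **Meinardus' lemma for the Euler product** (Remark 4 of the paper): there is a
constant `0 < c₁ < 1` such that, as `d → 0⁺`,
`log g(e^{−d}) = ζ(2)/d + (1/2)·log d − (1/2)·log(2π) + O(d^{c₁})`, with `ζ(2) = π²/6`. -/
theorem log_euler_product_asymptotics :
    ∃ c₁ : ℝ, 0 < c₁ ∧ c₁ < 1 ∧
      (fun d : ℝ =>
          Real.log (gR (Real.exp (-d))) -
            (Real.pi ^ 2 / 6 / d + (1 / 2) * Real.log d - (1 / 2) * Real.log (2 * Real.pi)))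
        =O[nhdsWithin 0 (Set.Ioi 0)] (fun d : ℝ => d ^ c₁) :=
  ⟨1 / 2, by norm_num, by norm_num, log_euler_product_asymptotics_general (by norm_num)⟩
end

section
/- Let d_n be the unique positive solution of Σ_{j=1}^∞ j·e^{−jd}/(1 − e^{−jd}) = n and let b_n = Σ_{j=1}^∞ j²·e^{−j d_n}/(1 − e^{−j d_n})². For every sequence ω(n) → ∞, setting δ_n = d_n^{4/3}/ω(n), one has, uniformly for |θ| ≤ δ_n as n → ∞, e^{−iθn}·g(e^{−d_n + iθ})/g(e^{−d_n}) = e^{−θ²·b_n/2}·(1 + O(1/ω(n)³)). -/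
open Filter Asymptotics Topology

/-- `aFun d = Σ_{j≥1} j·e^{−jd}/(1 − e^{−jd})`. -/
noncomputable def aFun (d : ℝ) : ℝ :=
  ∑' j : ℕ, (j + 1 : ℝ) * Real.exp (-(j + 1) * d) / (1 - Real.exp (-(j + 1) * d))

/-- `bFun d = Σ_{j≥1} j²·e^{−jd}/(1 − e^{−jd})²`. -/
noncomputable def bFun (d : ℝ) : ℝ :=
  ∑' j : ℕ, (j + 1 : ℝ) ^ 2 * Real.exp (-(j + 1) * d) / (1 - Real.exp (-(j + 1) * d)) ^ 2

/-- `gC x = ∏_{j≥1} (1 − x^j)⁻¹` (complex Euler product), for `|x| < 1`. -/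
noncomputable def gC (x : ℂ) : ℂ := ∏' j : ℕ, (1 - x ^ (j + 1))⁻¹

/-!
The `j`-th factor of `g(e^{-d+iθ}) / g(e^{-d})` is the characteristic function at `jθ` of a
geometric random variable with mean `p_j = e^{-jd} / (1 - e^{-jd})` and variance `p_j + p_j²`.
Summing the second-order expansions of the logarithms of these factors gives
`iθ a(d) - θ² b(d) / 2` with an error at most `|θ|³ ∑ j³ (p_j + p_j² + p_j³) = O(|θ|³ / d⁴)`, which
is `O(1 / ω³)` when `|θ| ≤ d^{4/3} / ω`. The saddle-point equation `a(d_n) = n` makes the linear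
term cancel `e^{-iθn}` and forces `d_n ≤ 1` eventually, so that `d_n^{4/3} ≤ d_n` and the expansions
apply.
-/

section

open Complex (I)

variable {c d p x y θ : ℝ}

theorem hasDerivAt_I_mul_ofReal (x : ℝ) : HasDerivAt (fun t : ℝ ↦ I * (t : ℂ)) I x := by
  simpa using (Complex.ofRealCLM.hasDerivAt (x := x)).const_mul I

theorem hasDerivAt_sum_I_mul_pow_div_factorial (n : ℕ) (x : ℝ) :
    HasDerivAt (fun t : ℝ ↦ ∑ k ∈ Finset.range (n + 1), (I * t) ^ k / k.factorial)
      (I * ∑ k ∈ Finset.range n, (I * x) ^ k / k.factorial) x := by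
  simp only [Finset.sum_range_succ' _ n, pow_zero, Finset.mul_sum]
  refine (HasDerivAt.fun_sum fun k _ ↦ ?_).add_const _
  convert! ((hasDerivAt_I_mul_ofReal x).fun_pow (k + 1)).div_const ((k + 1).factorial : ℂ) using 1
  have : (k.factorial : ℂ) ≠ 0 := by exact_mod_cast k.factorial_ne_zero
  have : (k : ℂ) + 1 ≠ 0 := by exact_mod_cast k.succ_ne_zero
  simp only [Nat.factorial_succ, add_tsub_cancel_right]
  push_cast
  field_simp

theorem norm_exp_I_mul_sub_sum_le_of_nonneg (n : ℕ) (hx : 0 ≤ x) :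
    ‖Complex.exp (I * x) - ∑ k ∈ Finset.range n, (I * x) ^ k / k.factorial‖
      ≤ x ^ n / n.factorial := by
  induction n generalizing x with
  | zero => simp [Complex.norm_exp_I_mul_ofReal]
  | succ n ih =>
    have hremainder (t : ℝ) : HasDerivAt
        (fun t : ℝ ↦ Complex.exp (I * t) - ∑ k ∈ Finset.range (n + 1), (I * t) ^ k / k.factorial)
        (I * (Complex.exp (I * t) - ∑ k ∈ Finset.range n, (I * t) ^ k / k.factorial)) t := by
      convert! (hasDerivAt_I_mul_ofReal t).cexp.sub
        (hasDerivAt_sum_I_mul_pow_div_factorial n t) using 1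
      ring
    have hbound (t : ℝ) :
        HasDerivAt (fun t : ℝ ↦ t ^ (n + 1) / (n + 1).factorial) (t ^ n / n.factorial) t := by
      convert! (hasDerivAt_pow (n + 1) t).div_const ((n + 1).factorial : ℝ) using 1
      simp only [Nat.factorial_succ, add_tsub_cancel_right]
      push_cast
      field_simp
    refine image_norm_le_of_norm_deriv_right_le_deriv_boundary (a := 0) (b := x)
      (fun t _ ↦ (hremainder t).continuousAt.continuousWithinAt)
      (fun t _ ↦ (hremainder t).hasDerivWithinAt) (by simp [Finset.sum_range_succ'])
      hbound (fun t ht ↦ ?_) ⟨hx, le_rfl⟩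
    simpa using ih ht.1

theorem norm_exp_I_mul_sub_sum_le (n : ℕ) (x : ℝ) :
    ‖Complex.exp (I * x) - ∑ k ∈ Finset.range n, (I * x) ^ k / k.factorial‖
      ≤ |x| ^ n / n.factorial := by
  rcases le_total 0 x with hx | hx
  · simpa only [abs_of_nonneg hx] using norm_exp_I_mul_sub_sum_le_of_nonneg n hx
  · rw [← Complex.norm_conj, abs_of_nonpos hx]
    simpa [← Complex.exp_conj, map_sum] using
      norm_exp_I_mul_sub_sum_le_of_nonneg n (neg_nonneg.2 hx)

/-- The Bose–Einstein weight `1 / (e^y - 1)`, i.e. the mean of a geometric random variable on `ℕ`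
with ratio `e^{-y}`. It is written in the form in which it occurs in `aFun`, and is meaningful for
`0 < y`. -/
noncomputable def boseEinstein (y : ℝ) : ℝ := Real.exp (-y) / (1 - Real.exp (-y))

theorem one_sub_exp_neg_pos (hy : 0 < y) : 0 < 1 - Real.exp (-y) := by
  simpa using hy

theorem boseEinstein_pos (hy : 0 < y) : 0 < boseEinstein y :=
  div_pos (Real.exp_pos _) (one_sub_exp_neg_pos hy)

theorem inv_one_sub_exp_neg (hy : 0 < y) : (1 - Real.exp (-y))⁻¹ = 1 + boseEinstein y := by
  have := (one_sub_exp_neg_pos hy).ne'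
  unfold boseEinstein
  field_simp
  ring

theorem exp_neg_div_one_sub_exp_neg_sq (hy : 0 < y) :
    Real.exp (-y) / (1 - Real.exp (-y)) ^ 2 = boseEinstein y + boseEinstein y ^ 2 := by
  have := (one_sub_exp_neg_pos hy).ne'
  unfold boseEinstein
  field_simp
  ring

theorem mul_boseEinstein_le_exp (hy : 0 < y) : y * boseEinstein y ≤ Real.exp (-(y / 2)) := by
  have hsinh : y / 2 ≤ Real.sinh (y / 2) := Real.self_le_sinh_iff.2 (by positivity)
  have hsq : Real.exp (-y) = Real.exp (-(y / 2)) * Real.exp (-(y / 2)) := by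
    rw [← Real.exp_add]; ring_nf
  have hinv : Real.exp (y / 2) * Real.exp (-(y / 2)) = 1 := by rw [← Real.exp_add]; simp
  have hmul : y * Real.exp (-(y / 2)) ≤ 1 - Real.exp (-y) := by
    rw [Real.sinh_eq] at hsinh
    nlinarith [Real.exp_pos (-(y / 2))]
  rw [boseEinstein, ← mul_div_assoc, div_le_iff₀ (one_sub_exp_neg_pos hy), hsq]
  rw [hsq] at hmul
  nlinarith [Real.exp_pos (-(y / 2))]

theorem mul_boseEinstein_le_one (hy : 0 < y) : y * boseEinstein y ≤ 1 :=
  (mul_boseEinstein_le_exp hy).trans (Real.exp_le_one_iff.2 (by linarith))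

theorem cube_mul_boseEinstein_add_sq_add_cube_le (hy : 0 < y) :
    y ^ 3 * (boseEinstein y + boseEinstein y ^ 2 + boseEinstein y ^ 3)
      ≤ 32 * Real.exp (-(y / 4)) := by
  set m := y * boseEinstein y with hm
  have hm0 : 0 ≤ m := (mul_pos hy (boseEinstein_pos hy)).le
  have hm1 : m ≤ 1 := mul_boseEinstein_le_one hy
  have hpoly : y ^ 2 + y + 1 ≤ 32 * Real.exp (y / 4) := by
    nlinarith [Real.quadratic_le_exp_of_nonneg (x := y / 4) (by positivity)]
  calc y ^ 3 * (boseEinstein y + boseEinstein y ^ 2 + boseEinstein y ^ 3)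
      = (y ^ 2 + y * m + m ^ 2) * m := by rw [hm]; ring
    _ ≤ (y ^ 2 + y * 1 + 1 ^ 2) * m := by gcongr
    _ ≤ 32 * Real.exp (y / 4) * Real.exp (-(y / 2)) := by
        rw [mul_one, one_pow]
        gcongr
        exact mul_boseEinstein_le_exp hy
    _ = 32 * Real.exp (-(y / 4)) := by
        rw [mul_assoc, ← Real.exp_add]; ring_nf

theorem hasSum_exp_neg_succ_mul (hc : 0 < c) :
    HasSum (fun j : ℕ ↦ Real.exp (-((j + 1) * c))) (boseEinstein c) := by
  have hgeom := (hasSum_geometric_of_lt_one (Real.exp_pos (-c)).le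
    (Real.exp_lt_one_iff.2 (by linarith))).mul_left (Real.exp (-c))
  convert! hgeom using 1
  funext j
  rw [← pow_succ', ← Real.exp_nat_mul]
  push_cast
  ring_nf

theorem tsum_le_div_of_le_exp_neg {f : ℕ → ℝ} {A : ℝ} (hc : 0 < c) (hA : 0 ≤ A)
    (hf : Summable f) (hle : ∀ j : ℕ, f j ≤ A * Real.exp (-((j + 1) * c))) :
    ∑' j, f j ≤ A / c :=
  calc ∑' j, f j ≤ A * boseEinstein c :=
        hasSum_le hle hf.hasSum ((hasSum_exp_neg_succ_mul hc).mul_left A)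
    _ ≤ A * (1 / c) := by
        gcongr
        rw [le_div_iff₀' hc]
        exact mul_boseEinstein_le_one hc
    _ = A / c := mul_one_div A c

theorem boseEinstein_succ_mul_le (hd : 0 < d) (j : ℕ) :
    boseEinstein ((j + 1) * d) ≤ (1 + boseEinstein d) * Real.exp (-d) ^ (j + 1) := by
  have hmono : d ≤ (j + 1) * d := le_mul_of_one_le_left hd.le (by simp)
  have hexp : Real.exp (-((j + 1) * d)) = Real.exp (-d) ^ (j + 1) := by
    rw [← Real.exp_nat_mul]; push_cast; ring_nf
  rw [boseEinstein, hexp, ← inv_one_sub_exp_neg hd, mul_comm, ← div_eq_mul_inv, ← hexp]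
  gcongr
  exact one_sub_exp_neg_pos hd

theorem summable_succ_pow_mul_boseEinstein_pow (hd : 0 < d) (k m : ℕ) :
    Summable fun j : ℕ ↦ ((j : ℝ) + 1) ^ k * boseEinstein ((j + 1) * d) ^ (m + 1) := by
  have hratio : ‖Real.exp (-d) ^ (m + 1)‖ < 1 := by
    rw [Real.norm_of_nonneg (by positivity)]
    exact pow_lt_one₀ (Real.exp_pos _).le (Real.exp_lt_one_iff.2 (by linarith)) m.succ_ne_zero
  have hmajorant : Summable fun j : ℕ ↦ (1 + boseEinstein d) ^ (m + 1)
      * (((j + 1 : ℕ) : ℝ) ^ k * (Real.exp (-d) ^ (m + 1)) ^ (j + 1)) :=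
    ((summable_pow_mul_geometric_of_norm_lt_one k hratio).comp_injective
      (add_left_injective 1)).mul_left _
  have hpos (j : ℕ) : 0 < boseEinstein ((j + 1) * d) := boseEinstein_pos (by positivity)
  refine Summable.of_nonneg_of_le (fun j ↦ by have := hpos j; positivity) (fun j ↦ ?_) hmajorant
  rw [pow_right_comm, Nat.cast_succ, mul_left_comm, ← mul_pow]
  gcongr
  · exact (hpos j).le
  · exact boseEinstein_succ_mul_le hd j

theorem hasSum_aFun (hd : 0 < d) :
    HasSum (fun j : ℕ ↦ ((j : ℝ) + 1) * boseEinstein ((j + 1) * d)) (aFun d) := by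
  have hsum := (summable_succ_pow_mul_boseEinstein_pow hd 1 0).hasSum
  simpa only [aFun, boseEinstein, pow_one, zero_add, neg_mul, mul_div_assoc] using hsum

theorem hasSum_bFun (hd : 0 < d) :
    HasSum (fun j : ℕ ↦ ((j : ℝ) + 1) ^ 2 *
      (boseEinstein ((j + 1) * d) + boseEinstein ((j + 1) * d) ^ 2)) (bFun d) := by
  have hsum := ((summable_succ_pow_mul_boseEinstein_pow hd 2 0).add
    (summable_succ_pow_mul_boseEinstein_pow hd 2 1)).hasSum
  have hterm (j : ℕ) := exp_neg_div_one_sub_exp_neg_sq (y := (j + 1) * d) (by positivity)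
  simpa only [bFun, neg_mul, mul_div_assoc, hterm, zero_add, pow_one, one_add_one_eq_two,
    ← mul_add] using hsum

theorem aFun_le (hd : 0 < d) : aFun d ≤ 2 / d ^ 2 := by
  have hterm (j : ℕ) : ((j : ℝ) + 1) * boseEinstein ((j + 1) * d)
      ≤ 1 / d * Real.exp (-((j + 1) * (d / 2))) := by
    rw [one_div_mul_eq_div, le_div_iff₀ hd, ← mul_div_assoc, mul_right_comm]
    exact mul_boseEinstein_le_exp (by positivity)
  calc aFun d ≤ 1 / d / (d / 2) := by
        rw [← (hasSum_aFun hd).tsum_eq]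
        exact tsum_le_div_of_le_exp_neg (half_pos hd) (by positivity)
          (hasSum_aFun hd).summable hterm
    _ = 2 / d ^ 2 := by field_simp

theorem le_one_of_two_lt_aFun (hd : 0 < d) (ha : 2 < aFun d) : d ≤ 1 := by
  by_contra! hd1
  have : 2 / d ^ 2 ≤ 2 := div_le_self (by norm_num) (one_le_pow₀ hd1.le)
  linarith [aFun_le hd]

/-- The weight `k³ (p_k + p_k² + p_k³)` for `k = j + 1`, with `p_k` the Bose–Einstein weight at
`k d`; it controls the third-order error of the `k`-th factor of the Euler product. -/
noncomputable def cubicWeight (d : ℝ) (j : ℕ) : ℝ :=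
  ((j : ℝ) + 1) ^ 3 * (boseEinstein ((j + 1) * d)
    + boseEinstein ((j + 1) * d) ^ 2 + boseEinstein ((j + 1) * d) ^ 3)

theorem summable_cubicWeight (hd : 0 < d) : Summable (cubicWeight d) := by
  have hsum := ((summable_succ_pow_mul_boseEinstein_pow hd 3 0).add
    (summable_succ_pow_mul_boseEinstein_pow hd 3 1)).add
    (summable_succ_pow_mul_boseEinstein_pow hd 3 2)
  refine hsum.congr fun j ↦ ?_
  rw [cubicWeight]
  ring

theorem cubicWeight_le (hd : 0 < d) (j : ℕ) :
    cubicWeight d j ≤ 32 / d ^ 3 * Real.exp (-((j + 1) * (d / 4))) := by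
  rw [cubicWeight, div_mul_eq_mul_div, le_div_iff₀ (by positivity), ← mul_div_assoc,
    mul_right_comm, ← mul_pow]
  exact cube_mul_boseEinstein_add_sq_add_cube_le (by positivity)

theorem tsum_cubicWeight_le (hd : 0 < d) : ∑' j, cubicWeight d j ≤ 128 / d ^ 4 :=
  calc ∑' j, cubicWeight d j ≤ 32 / d ^ 3 / (d / 4) :=
        tsum_le_div_of_le_exp_neg (by positivity) (by positivity) (summable_cubicWeight hd)
          (cubicWeight_le hd)
    _ = 128 / d ^ 4 := by field_simp; norm_num

/-- The logarithm of the characteristic function at `x` of a geometric random variable on `ℕ` with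
mean `p`. The principal branch is the right one when `p * |x| < 1`. -/
noncomputable def logGeomCharFun (p x : ℝ) : ℂ :=
  Complex.log (1 - p * (Complex.exp (I * x) - 1))⁻¹

theorem norm_ofReal_mul_exp_I_mul_sub_one_le (hp : 0 ≤ p) (x : ℝ) :
    ‖(p : ℂ) * (Complex.exp (I * x) - 1)‖ ≤ p * |x| := by
  rw [norm_mul, Complex.norm_of_nonneg hp]
  gcongr
  exact Real.norm_exp_I_mul_ofReal_sub_one_le

theorem exp_logGeomCharFun (hp : 0 ≤ p) (hpx : p * |x| < 1) :
    Complex.exp (logGeomCharFun p x) = (1 - p * (Complex.exp (I * x) - 1))⁻¹ := by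
  refine Complex.exp_log (inv_ne_zero (sub_ne_zero.2 fun hone ↦ ?_))
  have hlt := (norm_ofReal_mul_exp_I_mul_sub_one_le hp x).trans_lt hpx
  rw [← hone, norm_one] at hlt
  exact hlt.false

theorem norm_log_one_sub_inv_sub_quadratic_le {w : ℂ} (hw : ‖w‖ ≤ 1 / 2) :
    ‖Complex.log (1 - w)⁻¹ - (w + w ^ 2 / 2)‖ ≤ ‖w‖ ^ 3 := by
  have htaylor : Complex.logTaylor (2 + 1) (-w) = -(w + w ^ 2 / 2) := by
    simp only [Complex.logTaylor_succ, Complex.logTaylor_zero, Pi.add_apply]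
    push_cast
    ring
  have hinv : (1 - ‖w‖)⁻¹ ≤ 2 := inv_le_of_inv_le₀ (by norm_num) (by linarith)
  calc ‖Complex.log (1 - w)⁻¹ - (w + w ^ 2 / 2)‖
      ≤ ‖w‖ ^ 3 * (1 - ‖w‖)⁻¹ / 3 := by
        have := Complex.norm_log_one_sub_inv_add_logTaylor_neg_le 2 (z := w) (by linarith)
        rw [htaylor, ← sub_eq_add_neg] at this
        exact this.trans_eq (by norm_num)
    _ ≤ ‖w‖ ^ 3 * 2 / 3 := by gcongr
    _ ≤ ‖w‖ ^ 3 := by linarith [pow_nonneg (norm_nonneg w) 3]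

/-- With `u = e^{ix} - 1`, the error splits into the cubic remainder of the logarithm at `p u`, the
cubic remainder of `u`, and `u² - (ix)² = (u - ix) (u + ix)`. -/
theorem norm_logGeomCharFun_sub_le (hp : 0 ≤ p) (hpx : p * |x| ≤ 1 / 2) :
    ‖logGeomCharFun p x - (I * (p * x) - (p + p ^ 2) * x ^ 2 / 2)‖
      ≤ |x| ^ 3 * (p + p ^ 2 + p ^ 3) := by
  set u := Complex.exp (I * x) - 1 with hu
  have hpu : ‖p * u‖ ≤ p * |x| := norm_ofReal_mul_exp_I_mul_sub_one_le hp x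
  have hlog : ‖logGeomCharFun p x - (p * u + (p * u) ^ 2 / 2)‖ ≤ (p * |x|) ^ 3 :=
    (norm_log_one_sub_inv_sub_quadratic_le (hpu.trans hpx)).trans (by gcongr)
  have hquad : ‖u - I * x‖ ≤ |x| ^ 2 / 2 := by
    simpa [Finset.sum_range_succ, hu, sub_sub] using norm_exp_I_mul_sub_sum_le 2 x
  have hcub : ‖u - I * x + x ^ 2 / 2‖ ≤ |x| ^ 3 / 6 := by
    convert! norm_exp_I_mul_sub_sum_le 3 x using 2
    simp only [hu, Finset.sum_range_succ, Finset.sum_range_zero, Nat.factorial]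
    push_cast
    linear_combination ((x : ℂ) ^ 2 / 2) * Complex.I_sq
  have hadd : ‖u + I * x‖ ≤ 2 * |x| := by
    refine (norm_add_le_of_le Real.norm_exp_I_mul_ofReal_sub_one_le le_rfl).trans_eq ?_
    simp [two_mul]
  calc ‖logGeomCharFun p x - (I * (p * x) - (p + p ^ 2) * x ^ 2 / 2)‖
      = ‖(logGeomCharFun p x - (p * u + (p * u) ^ 2 / 2)) + p * (u - I * x + x ^ 2 / 2)
          + p ^ 2 / 2 * ((u - I * x) * (u + I * x))‖ := by
        congr 1
        linear_combination ((p : ℂ) ^ 2 * x ^ 2 / 2) * Complex.I_sq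
    _ ≤ (p * |x|) ^ 3 + p * (|x| ^ 3 / 6) + p ^ 2 / 2 * (|x| ^ 2 / 2 * (2 * |x|)) := by
        refine norm_add₃_le.trans ?_
        simp only [norm_mul, norm_div, norm_pow, Complex.norm_of_nonneg hp, Complex.norm_two]
        gcongr
    _ ≤ |x| ^ 3 * (p + p ^ 2 + p ^ 3) := by
        have : 0 ≤ |x| ^ 3 * p := by positivity
        have : 0 ≤ |x| ^ 3 * p ^ 2 := by positivity
        linarith

/-- The logarithm of `g(e^{-d+iθ}) / g(e^{-d})` for `|θ|` small compared with `d`, obtained by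
summing the logarithms of the factors. -/
noncomputable def eulerLogRatio (d θ : ℝ) : ℂ :=
  ∑' j : ℕ, logGeomCharFun (boseEinstein ((j + 1) * d)) ((j + 1) * θ)

theorem boseEinstein_mul_abs_le_half (hy : 0 < y) (hx : |x| ≤ y / 2) :
    boseEinstein y * |x| ≤ 1 / 2 :=
  calc boseEinstein y * |x| ≤ boseEinstein y * (y / 2) := by
        gcongr
        exact (boseEinstein_pos hy).le
    _ = y * boseEinstein y / 2 := by ring
    _ ≤ 1 / 2 := by
        gcongr
        exact mul_boseEinstein_le_one hy

theorem boseEinstein_succ_mul_abs_le_half (hd : 0 < d) (hθ : |θ| ≤ d / 2) (j : ℕ) :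
    boseEinstein ((j + 1) * d) * |(j + 1) * θ| ≤ 1 / 2 := by
  refine boseEinstein_mul_abs_le_half (by positivity) ?_
  rw [abs_mul, abs_of_pos (by positivity), mul_div_assoc]
  gcongr

/-- The second-order expansion of the `j`-th summand of `eulerLogRatio d θ`. -/
noncomputable def eulerLogRatioQuadratic (d θ : ℝ) (j : ℕ) : ℂ :=
  I * (boseEinstein ((j + 1) * d) * ((j + 1) * θ : ℝ))
    - (boseEinstein ((j + 1) * d) + boseEinstein ((j + 1) * d) ^ 2) * ((j + 1) * θ : ℝ) ^ 2 / 2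

theorem hasSum_eulerLogRatioQuadratic (hd : 0 < d) (θ : ℝ) :
    HasSum (eulerLogRatioQuadratic d θ) (I * (θ * aFun d) - θ ^ 2 * bFun d / 2) := by
  have hlinear := (Complex.hasSum_ofReal.2 (hasSum_aFun hd)).mul_left (I * θ)
  have hquadratic := (Complex.hasSum_ofReal.2 (hasSum_bFun hd)).mul_left ((θ : ℂ) ^ 2 / 2)
  convert! hlinear.sub hquadratic using 1
  · funext j
    simp only [eulerLogRatioQuadratic]
    push_cast
    ring
  · ring

theorem norm_logGeomCharFun_sub_eulerLogRatioQuadratic_le (hd : 0 < d) (hθ : |θ| ≤ d / 2) (j : ℕ) :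
    ‖logGeomCharFun (boseEinstein ((j + 1) * d)) ((j + 1) * θ) - eulerLogRatioQuadratic d θ j‖
      ≤ |θ| ^ 3 * cubicWeight d j := by
  refine (norm_logGeomCharFun_sub_le (boseEinstein_pos (by positivity)).le
    (boseEinstein_succ_mul_abs_le_half hd hθ j)).trans_eq ?_
  rw [abs_mul, abs_of_pos (by positivity : (0 : ℝ) < j + 1), cubicWeight]
  ring

theorem hasSum_eulerLogRatio (hd : 0 < d) (hθ : |θ| ≤ d / 2) :
    HasSum (fun j : ℕ ↦ logGeomCharFun (boseEinstein ((j + 1) * d)) ((j + 1) * θ))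
      (eulerLogRatio d θ) := by
  have herror := Summable.of_norm_bounded ((summable_cubicWeight hd).mul_left (|θ| ^ 3))
    (norm_logGeomCharFun_sub_eulerLogRatioQuadratic_le hd hθ)
  have hsum := herror.add (hasSum_eulerLogRatioQuadratic hd θ).summable
  simp only [sub_add_cancel] at hsum
  exact hsum.hasSum

theorem norm_eulerLogRatio_sub_le (hd : 0 < d) (hθ : |θ| ≤ d / 2) :
    ‖eulerLogRatio d θ - (I * (θ * aFun d) - θ ^ 2 * bFun d / 2)‖ ≤ 128 * |θ| ^ 3 / d ^ 4 := by
  have hdiff := (hasSum_eulerLogRatio hd hθ).sub (hasSum_eulerLogRatioQuadratic hd θ)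
  rw [← hdiff.tsum_eq]
  refine (tsum_of_norm_bounded ((summable_cubicWeight hd).mul_left (|θ| ^ 3)).hasSum
    (norm_logGeomCharFun_sub_eulerLogRatioQuadratic_le hd hθ)).trans ?_
  rw [tsum_mul_left, mul_comm 128, mul_div_assoc]
  gcongr
  exact tsum_cubicWeight_le hd

theorem gR_exp_neg (d : ℝ) : gR (Real.exp (-d)) = ∏' j : ℕ, (1 - Real.exp (-((j + 1) * d)))⁻¹ := by
  simp only [gR, ← Real.exp_nat_mul]
  push_cast
  simp only [mul_neg]

theorem summable_boseEinstein_succ_mul (hd : 0 < d) :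
    Summable fun j : ℕ ↦ boseEinstein ((j + 1) * d) := by
  simpa using summable_succ_pow_mul_boseEinstein_pow hd 0 0

theorem hasProd_gR (hd : 0 < d) :
    HasProd (fun j : ℕ ↦ 1 + boseEinstein ((j + 1) * d)) (gR (Real.exp (-d))) := by
  have hfactor (j : ℕ) := inv_one_sub_exp_neg (y := (j + 1) * d) (by positivity)
  rw [gR_exp_neg, tprod_congr hfactor]
  exact (Real.multipliable_one_add_of_summable (summable_boseEinstein_succ_mul hd)).hasProd

theorem gR_exp_neg_ne_zero (hd : 0 < d) : gR (Real.exp (-d)) ≠ 0 := by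
  have hpos (j : ℕ) : 0 < boseEinstein ((j + 1) * d) := boseEinstein_pos (by positivity)
  rw [← (hasProd_gR hd).tprod_eq]
  exact tprod_one_add_ne_zero_of_summable (fun j ↦ by linarith [hpos j])
    (summable_boseEinstein_succ_mul hd).norm

theorem inv_one_sub_exp_neg_add_mul_I (hy : 0 < y) (x : ℝ) :
    (1 - Complex.exp (-y + x * I))⁻¹
      = (1 + boseEinstein y : ℝ) * (1 - boseEinstein y * (Complex.exp (I * x) - 1))⁻¹ := by
  have hne : (1 - Complex.exp (-y)) ≠ 0 := by exact_mod_cast (one_sub_exp_neg_pos hy).ne'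
  rw [← inv_one_sub_exp_neg hy, Complex.ofReal_inv, ← mul_inv, Complex.exp_add, mul_comm I,
    boseEinstein]
  push_cast
  congr 1
  field_simp
  ring

theorem gC_div_gR (hd : 0 < d) (hθ : |θ| ≤ d / 2) :
    gC (Complex.exp (-d + θ * I)) / gR (Real.exp (-d)) = Complex.exp (eulerLogRatio d θ) := by
  have hprod := ((hasProd_gR hd).map Complex.ofRealHom Complex.continuous_ofReal).mul
    (hasSum_eulerLogRatio hd hθ).cexp
  rw [div_eq_iff (by exact_mod_cast gR_exp_neg_ne_zero hd), mul_comm (Complex.exp _)]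
  refine Eq.trans (tprod_congr fun j ↦ ?_) hprod.tprod_eq
  have hexp : Complex.exp (-d + θ * I) ^ (j + 1)
      = Complex.exp (-((j + 1) * d : ℝ) + ((j + 1) * θ : ℝ) * I) := by
    rw [← Complex.exp_nat_mul]
    push_cast
    ring_nf
  have hchar := exp_logGeomCharFun (boseEinstein_pos (y := (j + 1) * d) (by positivity)).le
    ((boseEinstein_succ_mul_abs_le_half hd hθ j).trans_lt one_half_lt_one)
  rw [hexp, inv_one_sub_exp_neg_add_mul_I (by positivity), ← hchar]
  rfl

theorem norm_exp_mul_gC_div_gR_sub_gaussian_le (hd : 0 < d) (hθ : |θ| ≤ d / 2) {B : ℝ}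
    (hB : 128 * |θ| ^ 3 / d ^ 4 ≤ B) :
    ‖Complex.exp (-(θ * aFun d) * I) * gC (Complex.exp (-d + θ * I)) / gR (Real.exp (-d))
        - Real.exp (-θ ^ 2 * bFun d / 2)‖
      ≤ B * Real.exp B * Real.exp (-θ ^ 2 * bFun d / 2) := by
  set E := eulerLogRatio d θ - (I * (θ * aFun d) - θ ^ 2 * bFun d / 2) with hE
  have hEB : ‖E‖ ≤ B := (norm_eulerLogRatio_sub_le hd hθ).trans hB
  have hfactor :
      Complex.exp (-(θ * aFun d) * I) * gC (Complex.exp (-d + θ * I)) / gR (Real.exp (-d))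
        - Real.exp (-θ ^ 2 * bFun d / 2)
      = (Complex.exp E - 1) * Real.exp (-θ ^ 2 * bFun d / 2) := by
    rw [mul_div_assoc, gC_div_gR hd hθ, sub_one_mul, Complex.ofReal_exp, ← Complex.exp_add,
      ← Complex.exp_add, hE]
    push_cast
    ring_nf
  have hexp : ‖Complex.exp E - 1‖ ≤ ‖E‖ * Real.exp ‖E‖ := by
    simpa using Complex.norm_exp_sub_sum_le_norm_mul_exp E 1
  rw [hfactor, norm_mul, Complex.norm_of_nonneg (Real.exp_pos _).le]
  gcongr
  exact hexp.trans (by gcongr; exact (norm_nonneg E).trans hEB)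

theorem euler_product_locality_general :
    ∃ C : ℝ, 0 < C ∧ ∀ d W θ : ℝ, 0 < d → d ≤ 1 → 2 ≤ W → |θ| ≤ d ^ ((4 : ℝ) / 3) / W →
      ‖Complex.exp (-(θ * aFun d) * I) * gC (Complex.exp (-d + θ * I)) / gR (Real.exp (-d))
          - Real.exp (-θ ^ 2 * bFun d / 2)‖
        ≤ C * Real.exp (-θ ^ 2 * bFun d / 2) / W ^ 3 := by
  refine ⟨128 * Real.exp 128, by positivity, fun d W θ hd hd1 hW hθ ↦ ?_⟩
  have hpow : d ^ ((4 : ℝ) / 3) ≤ d := by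
    simpa using Real.rpow_le_rpow_of_exponent_ge hd hd1 (by norm_num : (1 : ℝ) ≤ 4 / 3)
  have hcube : (d ^ ((4 : ℝ) / 3)) ^ 3 = d ^ 4 := by
    rw [← Real.rpow_mul_natCast hd.le, ← Real.rpow_natCast]
    norm_num
  have hθd : |θ| ≤ d / 2 := hθ.trans (by gcongr)
  have herror : 128 * |θ| ^ 3 / d ^ 4 ≤ 128 / W ^ 3 :=
    calc 128 * |θ| ^ 3 / d ^ 4 ≤ 128 * (d ^ ((4 : ℝ) / 3) / W) ^ 3 / d ^ 4 := by gcongr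
      _ = 128 / W ^ 3 := by rw [div_pow, hcube]; field_simp
  have hW3 : 128 / W ^ 3 ≤ 128 := div_le_self (by norm_num) (one_le_pow₀ (by linarith))
  calc _ ≤ 128 / W ^ 3 * Real.exp (128 / W ^ 3) * Real.exp (-θ ^ 2 * bFun d / 2) :=
        norm_exp_mul_gC_div_gR_sub_gaussian_le hd hθd herror
    _ ≤ 128 / W ^ 3 * Real.exp 128 * Real.exp (-θ ^ 2 * bFun d / 2) := by gcongr
    _ = 128 * Real.exp 128 * Real.exp (-θ ^ 2 * bFun d / 2) / W ^ 3 := by ring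

end

/-- **Hayman's locality condition for the Euler product** (formula (24) of the paper):
with `d_n` solving `Σ_{j≥1} j·e^{−jd}/(1 − e^{−jd}) = n` and
`b_n = Σ_{j≥1} j²·e^{−j d_n}/(1 − e^{−j d_n})²`, for every `ω(n) → ∞`, uniformly for
`|θ| ≤ δ_n := d_n^{4/3}/ω(n)`,
`e^{−iθn}·g(e^{−d_n+iθ})/g(e^{−d_n}) = e^{−θ²b_n/2}·(1 + O(1/ω(n)³))`. -/
theorem euler_product_locality (d : ℕ → ℝ)
    (hd : ∀ n : ℕ, 0 < n → 0 < d n ∧ aFun (d n) = n) :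
    ∀ ω : ℕ → ℝ, Tendsto ω atTop atTop →
      ∃ C : ℝ, 0 < C ∧
        ∀ᶠ n : ℕ in atTop, ∀ θ : ℝ, |θ| ≤ d n ^ ((4 : ℝ) / 3) / ω n →
          ‖Complex.exp (-(θ * n) * Complex.I) *
                gC (Complex.exp (-(d n : ℂ) + θ * Complex.I)) / (gR (Real.exp (-(d n))) : ℂ)
              - (Real.exp (-θ ^ 2 * bFun (d n) / 2) : ℂ)‖
            ≤ C * Real.exp (-θ ^ 2 * bFun (d n) / 2) / ω n ^ 3 := by
  obtain ⟨C, hC, hlocal⟩ := euler_product_locality_general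
  refine fun ω hω ↦ ⟨C, hC, ?_⟩
  filter_upwards [hω.eventually_ge_atTop 2, eventually_gt_atTop 2] with n hωn hn θ hθ
  obtain ⟨hdn, hsaddle⟩ := hd n (by lia)
  have hdn1 : d n ≤ 1 := le_one_of_two_lt_aFun hdn (by rw [hsaddle]; exact_mod_cast hn)
  simpa only [hsaddle, Complex.ofReal_natCast] using hlocal (d n) (ω n) θ hdn hdn1 hωn hθ
end

section
/- Fix an integer m ≥ 1. Let d_n be the unique positive solution of Σ_{j=1}^∞ j·e^{−jd}/(1 − e^{−jd}) = n and set δ_n = d_n^{4/3}/log n. Then, as n → ∞, the tail integral J₂(m,n) = (e^{n d_n}/(2π))·∫_{δ_n ≤ |θ| ≤ π} g(e^{−d_n + iθ})·F_m(e^{−d_n + iθ})·e^{−iθn} dθ satisfies J₂(m,n) = o(p(n)·n^{(m+1)/2}). -/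
open Filter Asymptotics Topology

/-- `FC m x = Σ_{j≥1} j^m x^j/(1 − x^j)`, for `|x| < 1`. -/
noncomputable def FC (m : ℕ) (x : ℂ) : ℂ :=
  ∑' j : ℕ, (j + 1 : ℂ) ^ m * x ^ (j + 1) / (1 - x ^ (j + 1))

/-!
Write `c = π/√6`. Three estimates are combined.

* The elementary lower bound `p(n) ≥ A e^{2c√n} / n^K` of Erdős, by induction on the recursion
  `n p(n) = Σ_{0 < k ≤ n} σ(k) p(n - k)`: the first moment of `σ(k) e^{-kt}` at `t = c/√n`, which
  enters with the factor `K/n`, outweighs the second-order errors once `K` is large.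
* `n d_n + log g(e^{-d_n}) ≤ 2c√n`: since `t ↦ log g(e^{-t})` is convex with derivative `-n` at
  `d_n`, the left side is at most `n t + log g(e^{-t})` for every `t > 0`, in particular for
  `t = c/√n`.
* `|g(z)| ≤ g(|z|) exp (-¼ Σ_j (|z|^j - Re z^j))`, where on the tail `δ_n ≤ |θ| ≤ π` the sum is at
  least a constant times `n^{1/6} / (log n)^2`.

Hence `|J₂(m, n)|` is at most `p(n)` times a power of `n`, which also absorbs `F_m`, times
`exp (-n^{1/6} / (160 (log n)^2))`, and this factor decays faster than every power of `n`.
-/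

section Recursion

open Finset
open scoped ArithmeticFunction.sigma

theorem card_partition_le_count {n k v : ℕ} (hv : 0 < v) (h : k * v ≤ n) :
    #{l : n.Partition | k ≤ l.parts.count v} = Fintype.card (Nat.Partition (n - k * v)) := by
  symm
  refine card_bij (fun l _ => ⟨l.parts + Multiset.replicate k v, fun hi => ?_, ?_⟩)
    (fun l _ => ?_) (fun l _ l' _ hll' => ?_) (fun l hl => ?_)
  · rcases Multiset.mem_add.1 hi with hi | hi
    · exact l.parts_pos hi
    · exact Multiset.eq_of_mem_replicate hi ▸ hv
  · rw [Multiset.sum_add, l.parts_sum, Multiset.sum_replicate, smul_eq_mul, Nat.sub_add_cancel h]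
  · simp
  · exact Nat.Partition.ext (add_right_cancel (congrArg Nat.Partition.parts hll'))
  · have hle := Multiset.le_count_iff_replicate_le.1 (mem_filter.1 hl).2
    have hsum := congrArg Multiset.sum (tsub_add_cancel_of_le hle)
    rw [Multiset.sum_add, Multiset.sum_replicate, smul_eq_mul, l.parts_sum] at hsum
    exact ⟨⟨l.parts - Multiset.replicate k v,
      fun hi => l.parts_pos (Multiset.mem_of_le tsub_le_self hi), by lia⟩, mem_univ _,
      Nat.Partition.ext (tsub_add_cancel_of_le hle)⟩

theorem count_mul_le_of_partition {n : ℕ} (l : n.Partition) (v : ℕ) : l.parts.count v * v ≤ n := by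
  have hsum := congrArg Multiset.sum
    (tsub_add_cancel_of_le (Multiset.le_count_iff_replicate_le.1 (le_refl (l.parts.count v))))
  rw [Multiset.sum_add, Multiset.sum_replicate, smul_eq_mul, l.parts_sum] at hsum
  lia

theorem sum_Ioc_count_mul {n : ℕ} (l : n.Partition) :
    ∑ v ∈ Ioc 0 n, l.parts.count v * v = n := by
  have hsub : l.parts.toFinset ⊆ Ioc 0 n := fun v hv => by
    rw [Multiset.mem_toFinset] at hv
    exact mem_Ioc.2 ⟨l.parts_pos hv, l.le_of_mem_parts hv⟩
  simpa [l.parts_sum] using (sum_multiset_count_of_subset l.parts _ hsub).symm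

theorem card_Ioc_filter_le_count {n v : ℕ} (l : n.Partition) (hv : 0 < v) :
    #{k ∈ Ioc 0 n | k ≤ l.parts.count v} = l.parts.count v := by
  have hcount : l.parts.count v ≤ n :=
    (Nat.le_mul_of_pos_right _ hv).trans (count_mul_le_of_partition l v)
  have : {k ∈ Ioc 0 n | k ≤ l.parts.count v} = Ioc 0 (l.parts.count v) := by
    ext k; simp only [mem_filter, mem_Ioc]; lia
  rw [this, Nat.card_Ioc, Nat.sub_zero]

theorem sum_divisorsAntidiagonal_snd (m : ℕ) :
    ∑ q ∈ m.divisorsAntidiagonal, q.2 = σ 1 m := by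
  rw [ArithmeticFunction.sigma_one_apply, Nat.sum_divisorsAntidiagonal' (f := fun _ v => v)]

theorem sum_mul_card_partition_le_count (n : ℕ) :
    ∑ q ∈ Ioc 0 n ×ˢ Ioc 0 n, q.2 * #{l : n.Partition | q.1 ≤ l.parts.count q.2} =
      n * Fintype.card (Nat.Partition n) := by
  calc ∑ q ∈ Ioc 0 n ×ˢ Ioc 0 n, q.2 * #{l : n.Partition | q.1 ≤ l.parts.count q.2}
      = ∑ l : n.Partition, ∑ v ∈ Ioc 0 n, #{k ∈ Ioc 0 n | k ≤ l.parts.count v} * v := by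
        simp only [card_filter, mul_sum, sum_mul]
        rw [sum_comm]
        refine sum_congr rfl fun l _ => ?_
        rw [sum_product_right]
        simp only [mul_comm]
    _ = ∑ l : n.Partition, ∑ v ∈ Ioc 0 n, l.parts.count v * v :=
        sum_congr rfl fun l _ => sum_congr rfl fun v hv => by
          rw [card_Ioc_filter_le_count l (mem_Ioc.1 hv).1]
    _ = n * Fintype.card (Nat.Partition n) := by simp [sum_Ioc_count_mul, mul_comm n]

theorem sum_sigma_mul_card_partition (n : ℕ) :
    ∑ m ∈ Ioc 0 n, σ 1 m * Fintype.card (Nat.Partition (n - m)) =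
      n * Fintype.card (Nat.Partition n) := by
  calc ∑ m ∈ Ioc 0 n, σ 1 m * Fintype.card (Nat.Partition (n - m))
      = ∑ m ∈ Ioc 0 n, ∑ q ∈ Ioc 0 n ×ˢ Ioc 0 n with q.1 * q.2 = m,
          q.2 * #{l : n.Partition | q.1 ≤ l.parts.count q.2} := by
        refine sum_congr rfl fun m hm => ?_
        obtain ⟨hm0, hmn⟩ := mem_Ioc.1 hm
        rw [← Nat.divisorsAntidiagonal_eq_prod_filter_of_le hm0.ne' hmn,
          ← sum_divisorsAntidiagonal_snd, sum_mul]
        refine sum_congr rfl fun q hq => ?_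
        have hqm := (Nat.mem_divisorsAntidiagonal.1 hq).1
        rw [card_partition_le_count (Nat.pos_of_mul_pos_left (hqm ▸ hm0)) (hqm ▸ hmn), hqm]
    _ = ∑ q ∈ Ioc 0 n ×ˢ Ioc 0 n with q.1 * q.2 ∈ Ioc 0 n,
          q.2 * #{l : n.Partition | q.1 ≤ l.parts.count q.2} :=
        sum_fiberwise_eq_sum_filter _ _ (fun q : ℕ × ℕ => q.1 * q.2) _
    _ = ∑ q ∈ Ioc 0 n ×ˢ Ioc 0 n, q.2 * #{l : n.Partition | q.1 ≤ l.parts.count q.2} := by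
        refine sum_filter_of_ne fun q hq hne => ?_
        obtain ⟨hq1, hq2⟩ := mem_product.1 hq
        obtain ⟨l, hl⟩ := card_pos.1 (Nat.pos_of_ne_zero (right_ne_zero_of_mul hne))
        exact mem_Ioc.2 ⟨Nat.mul_pos (mem_Ioc.1 hq1).1 (mem_Ioc.1 hq2).1,
          (Nat.mul_le_mul_right _ (mem_filter.1 hl).2).trans (count_mul_le_of_partition l _)⟩
    _ = n * Fintype.card (Nat.Partition n) := sum_mul_card_partition_le_count n

end Recursion

section Moments

open Real
open scoped ArithmeticFunction.sigma

theorem sinh_le_mul_cosh {x : ℝ} (hx : 0 ≤ x) : sinh x ≤ x * cosh x := by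
  have hderiv (y : ℝ) : HasDerivAt (fun y => y * cosh y - sinh y) (y * sinh y) y := by
    simpa using! ((hasDerivAt_id y).mul (hasDerivAt_cosh y)).sub (hasDerivAt_sinh y)
  have hmono : MonotoneOn (fun y => y * cosh y - sinh y) (Set.Ici 0) :=
    monotoneOn_of_hasDerivWithinAt_nonneg (convex_Ici 0)
      (fun y _ => (hderiv y).continuousAt.continuousWithinAt)
      (fun y _ => (hderiv y).hasDerivWithinAt) fun y hy => by
        rw [interior_Ici, Set.mem_Ioi] at hy
        exact mul_nonneg hy.le (sinh_nonneg_iff.2 hy.le)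
  simpa using hmono Set.self_mem_Ici hx hx

theorem exp_neg_div_one_sub_exp_neg_sq_s18 (y : ℝ) :
    exp (-y) / (1 - exp (-y)) ^ 2 = 1 / (2 * sinh (y / 2)) ^ 2 := by
  have hfactor : 1 - exp (-y) = exp (-(y / 2)) * (2 * sinh (y / 2)) := by
    rw [sinh_eq, mul_div_cancel₀ _ two_ne_zero, mul_sub, ← exp_add, ← exp_add, neg_add_cancel,
      exp_zero, ← neg_add, add_halves]
  have hsq : exp (-y) = exp (-(y / 2)) ^ 2 := by rw [← exp_nat_mul]; ring_nf
  rw [hfactor, mul_pow, ← hsq, ← div_div, div_self (exp_ne_zero _)]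

theorem one_div_two_mul_sinh_half_sq_le {y : ℝ} (hy : 0 < y) :
    1 / (2 * sinh (y / 2)) ^ 2 ≤ 1 / y ^ 2 := by
  have := self_le_sinh_iff.2 (half_pos hy).le
  gcongr
  linarith

theorem le_one_div_two_mul_sinh_half_sq {y : ℝ} (hy : 0 < y) :
    1 / y ^ 2 - 4 * (1 / (2 + y) ^ 2) ≤ 1 / (2 * sinh (y / 2)) ^ 2 := by
  have hsinh : 0 < sinh (y / 2) := sinh_pos_iff.2 (half_pos hy)
  rcases le_or_gt 2 y with h2 | h2
  · have : 1 / y ^ 2 ≤ 4 * (1 / (2 + y) ^ 2) := by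
      rw [mul_one_div, div_le_div_iff₀ (by positivity) (by positivity)]
      nlinarith
    exact (sub_nonpos.2 this).trans (by positivity)
  · have hquarter : 1 / 4 ≤ 4 * (1 / (2 + y) ^ 2) := by
      rw [mul_one_div, div_le_div_iff₀ (by positivity) (by positivity)]
      nlinarith
    have htanh : sinh (y / 2) ^ 2 ≤ (y / 2) ^ 2 * (sinh (y / 2) ^ 2 + 1) := by
      rw [← cosh_sq, ← mul_pow]
      exact pow_le_pow_left₀ hsinh.le (sinh_le_mul_cosh (half_pos hy).le) 2
    have : 1 / y ^ 2 - 1 / 4 ≤ 1 / (2 * sinh (y / 2)) ^ 2 := by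
      rw [tsub_le_iff_right, mul_pow, div_add_div _ _ (by positivity) (by norm_num),
        div_le_div_iff₀ (by positivity) (by positivity)]
      linarith
    linarith

theorem sum_range_one_div_add_mul_sq_le {a t : ℝ} (ha : 0 < a) (ht : 0 < t) (n : ℕ) :
    ∑ k ∈ Finset.range n, 1 / (a + (k + 1) * t) ^ 2 ≤ 1 / (a * t) := by
  calc ∑ k ∈ Finset.range n, 1 / (a + (k + 1) * t) ^ 2
      ≤ ∑ k ∈ Finset.range n, (1 / (t * (a + k * t)) - 1 / (t * (a + (k + 1 : ℕ) * t))) := by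
        refine Finset.sum_le_sum fun k _ => ?_
        rw [show 1 / (t * (a + k * t)) - 1 / (t * (a + (k + 1 : ℕ) * t)) =
          1 / ((a + k * t) * (a + (k + 1) * t)) by push_cast; field_simp; ring, sq]
        gcongr
        linarith
    _ = 1 / (t * (a + (0 : ℕ) * t)) - 1 / (t * (a + n * t)) :=
        Finset.sum_range_sub' (fun k : ℕ => 1 / (t * (a + k * t))) n
    _ ≤ 1 / (t * (a + (0 : ℕ) * t)) := sub_le_self _ (by positivity)
    _ = 1 / (a * t) := by simp [mul_comm]

theorem hasSum_one_div_succ_mul_sq (t : ℝ) :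
    HasSum (fun k : ℕ => 1 / ((k + 1) * t) ^ 2) (π ^ 2 / 6 / t ^ 2) := by
  have h := ((hasSum_nat_add_iff' 1).2 hasSum_zeta_two).div_const (t ^ 2)
  simpa [mul_pow, div_eq_mul_inv, mul_comm] using h

theorem norm_exp_neg_lt_one {t : ℝ} (ht : 0 < t) : ‖exp (-t)‖ < 1 := by
  rwa [norm_eq_abs, abs_exp, exp_lt_one_iff, neg_lt_zero]

theorem exp_neg_natCast_mul (m : ℕ) (t : ℝ) : exp (-(m * t)) = exp (-t) ^ m := by
  rw [← exp_nat_mul, mul_neg]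

/-- The `r`-th moment `Σ_m σ(m) m^r e^{-mt}` of the sum-of-divisors function. -/
noncomputable def sigmaMoment (r : ℕ) (t : ℝ) : ℝ := ∑' m : ℕ, σ 1 m * m ^ r * exp (-(m * t))

theorem summable_sigmaMoment (r : ℕ) {t : ℝ} (ht : 0 < t) :
    Summable fun m : ℕ => σ 1 m * m ^ r * exp (-(m * t)) := by
  refine .of_nonneg_of_le (fun m => by positivity) (fun m => ?_)
    (summable_pow_mul_geometric_of_norm_lt_one (2 + r) (norm_exp_neg_lt_one ht))
  have hσ : (σ 1 m : ℝ) ≤ m ^ 2 := mod_cast ArithmeticFunction.sigma_le_pow_succ 1 m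
  rw [← exp_neg_natCast_mul, pow_add]
  gcongr

theorem tsum_pnat_sigma_mul_exp_neg_pow {t : ℝ} (ht : 0 < t) :
    ∑' m : ℕ+, σ 1 m * exp (-t) ^ (m : ℕ) = sigmaMoment 0 t := by
  simpa [sigmaMoment, exp_neg_natCast_mul] using
    tsum_zero_pnat_eq_tsum_nat (summable_sigmaMoment 0 ht)

theorem aFun_eq_sigmaMoment_zero {t : ℝ} (ht : 0 < t) : aFun t = sigmaMoment 0 t := by
  rw [← tsum_pnat_sigma_mul_exp_neg_pow ht,
    ← tsum_pow_div_one_sub_eq_tsum_sigma (norm_exp_neg_lt_one ht),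
    tsum_pnat_eq_tsum_succ (f := fun m => (m : ℝ) ^ 1 * exp (-t) ^ m / (1 - exp (-t) ^ m)), aFun]
  simp only [← exp_neg_natCast_mul, pow_one, Nat.cast_add_one, neg_mul]

theorem aFun_eq_tsum_one_div_sinh_sq {t : ℝ} (ht : 0 < t) :
    aFun t = ∑' k : ℕ, 1 / (2 * sinh ((k + 1) * t / 2)) ^ 2 := by
  rw [aFun_eq_sigmaMoment_zero ht, ← tsum_pnat_sigma_mul_exp_neg_pow ht,
    ← tsum_prod_pow_eq_tsum_sigma 1 (norm_exp_neg_lt_one ht),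
    tsum_pnat_eq_tsum_succ (f := fun k => ∑' v : ℕ+, (v : ℝ) ^ 1 * exp (-t) ^ (k * v : ℕ))]
  refine tsum_congr fun k => ?_
  have hk : ‖exp (-((k + 1) * t))‖ < 1 := norm_exp_neg_lt_one (by positivity)
  rw [← exp_neg_div_one_sub_exp_neg_sq_s18, ← tsum_coe_mul_geometric_of_norm_lt_one hk,
    ← tsum_zero_pnat_eq_tsum_nat (hasSum_coe_mul_geometric_of_norm_lt_one hk).summable]
  simp only [CharP.cast_eq_zero, zero_mul, zero_add, pow_one, pow_mul, ← exp_neg_natCast_mul,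
    Nat.cast_add_one]

theorem summable_one_div_sinh_sq {t : ℝ} (ht : 0 < t) :
    Summable fun k : ℕ => 1 / (2 * sinh ((k + 1) * t / 2)) ^ 2 :=
  .of_nonneg_of_le (fun _ => by positivity)
    (fun _ => one_div_two_mul_sinh_half_sq_le (by positivity))
    (hasSum_one_div_succ_mul_sq t).summable

theorem aFun_le_s18 {t : ℝ} (ht : 0 < t) : aFun t ≤ π ^ 2 / 6 / t ^ 2 := by
  rw [aFun_eq_tsum_one_div_sinh_sq ht, ← (hasSum_one_div_succ_mul_sq t).tsum_eq]
  exact (summable_one_div_sinh_sq ht).tsum_le_tsum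
    (fun _ => one_div_two_mul_sinh_half_sq_le (by positivity))
    (hasSum_one_div_succ_mul_sq t).summable

theorem le_aFun {t : ℝ} (ht : 0 < t) : π ^ 2 / 6 / t ^ 2 - 2 / t ≤ aFun t := by
  have hnonneg (k : ℕ) : 0 ≤ 1 / (2 + (k + 1) * t) ^ 2 := by positivity
  have hpartial := sum_range_one_div_add_mul_sq_le two_pos ht
  have hsummable := (summable_of_sum_range_le hnonneg hpartial).mul_left 4
  calc π ^ 2 / 6 / t ^ 2 - 2 / t
      ≤ π ^ 2 / 6 / t ^ 2 - 4 * ∑' k : ℕ, 1 / (2 + (k + 1) * t) ^ 2 := by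
        have := Real.tsum_le_of_sum_range_le hnonneg hpartial
        have : 2 / t = 4 * (1 / (2 * t)) := by field_simp; norm_num
        linarith
    _ = ∑' k : ℕ, (1 / ((k + 1) * t) ^ 2 - 4 * (1 / (2 + (k + 1) * t) ^ 2)) := by
        rw [(hasSum_one_div_succ_mul_sq t).summable.tsum_sub hsummable,
          (hasSum_one_div_succ_mul_sq t).tsum_eq, tsum_mul_left]
    _ ≤ aFun t := by
        rw [aFun_eq_tsum_one_div_sinh_sq ht]
        exact ((hasSum_one_div_succ_mul_sq t).summable.sub hsummable).tsum_le_tsum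
          (fun _ => le_one_div_two_mul_sinh_half_sq (by positivity)) (summable_one_div_sinh_sq ht)

end Moments

section MomentBounds

open Real
open scoped ArithmeticFunction.sigma Nat

theorem pow_mul_exp_neg_mul_le {x d : ℝ} (hx : 0 ≤ x) (hd : 0 < d) (r : ℕ) :
    x ^ r * exp (-(x * d)) ≤ r ! * (2 / d) ^ r * exp (-(x * (d / 2))) := by
  have hpow : (x * (d / 2)) ^ r ≤ r ! * exp (x * (d / 2)) := by
    rw [← div_le_iff₀' (by positivity)]
    exact pow_div_factorial_le_exp _ (by positivity) r
  calc x ^ r * exp (-(x * d))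
      = (2 / d) ^ r * (x * (d / 2)) ^ r * exp (-(x * d)) := by
        rw [← mul_pow]; congr 2; field_simp
    _ ≤ (2 / d) ^ r * (r ! * exp (x * (d / 2))) * exp (-(x * d)) := by gcongr
    _ = r ! * (2 / d) ^ r * (exp (x * (d / 2)) * exp (-(x * d))) := by ring
    _ = r ! * (2 / d) ^ r * exp (-(x * (d / 2))) := by rw [← exp_add]; ring_nf

theorem sigmaMoment_le (r : ℕ) {t : ℝ} (ht : 0 < t) :
    sigmaMoment r t ≤ r ! * 2 ^ (r + 2) * (π ^ 2 / 6) / t ^ (r + 2) := by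
  have ht2 := half_pos ht
  calc sigmaMoment r t
      ≤ ∑' m : ℕ, r ! * (2 / t) ^ r * (σ 1 m * m ^ 0 * exp (-(m * (t / 2)))) := by
        refine (summable_sigmaMoment r ht).tsum_le_tsum (fun m => ?_)
          ((summable_sigmaMoment 0 ht2).mul_left _)
        have := mul_le_mul_of_nonneg_left (pow_mul_exp_neg_mul_le m.cast_nonneg ht r)
          (Nat.cast_nonneg (σ 1 m))
        linarith
    _ = r ! * (2 / t) ^ r * aFun (t / 2) := by
        rw [tsum_mul_left, aFun_eq_sigmaMoment_zero ht2, sigmaMoment]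
    _ ≤ r ! * (2 / t) ^ r * (π ^ 2 / 6 / (t / 2) ^ 2) := by gcongr; exact aFun_le_s18 ht2
    _ = r ! * 2 ^ (r + 2) * (π ^ 2 / 6) / t ^ (r + 2) := by
        rw [div_pow, div_pow, pow_add, pow_add]; field_simp

theorem aFun_sub_aFun_two_mul_le {t : ℝ} (ht : 0 < t) :
    aFun t - aFun (2 * t) ≤ t * sigmaMoment 1 t := by
  have ht2 : 0 < 2 * t := by positivity
  rw [aFun_eq_sigmaMoment_zero ht, aFun_eq_sigmaMoment_zero ht2, sigmaMoment, sigmaMoment,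
    sigmaMoment, ← (summable_sigmaMoment 0 ht).tsum_sub (summable_sigmaMoment 0 ht2),
    ← tsum_mul_left]
  refine ((summable_sigmaMoment 0 ht).sub (summable_sigmaMoment 0 ht2)).tsum_le_tsum (fun m => ?_)
    ((summable_sigmaMoment 1 ht).mul_left t)
  have hconvex : 1 - exp (-(m * t)) ≤ m * t := by linarith [add_one_le_exp (-(m * t))]
  have hdouble : exp (-(m * (2 * t))) = exp (-(m * t)) * exp (-(m * t)) := by
    rw [← exp_add]; ring_nf
  calc σ 1 m * m ^ 0 * exp (-(m * t)) - σ 1 m * m ^ 0 * exp (-(m * (2 * t)))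
      = σ 1 m * exp (-(m * t)) * (1 - exp (-(m * t))) := by rw [hdouble]; ring
    _ ≤ σ 1 m * exp (-(m * t)) * (m * t) := by gcongr
    _ = t * (σ 1 m * m ^ 1 * exp (-(m * t))) := by ring

theorem le_sigmaMoment_one {t : ℝ} (ht : 0 < t) (ht' : t ≤ 1 / 4) :
    1 / (2 * t ^ 3) ≤ sigmaMoment 1 t := by
  have hpi : 1 ≤ π ^ 2 / 8 := by nlinarith [pi_gt_three]
  refine le_of_mul_le_mul_left ?_ ht
  calc t * (1 / (2 * t ^ 3))
      ≤ 1 / t ^ 2 - 2 / t := by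
        rw [← sub_nonneg, show 1 / t ^ 2 - 2 / t - t * (1 / (2 * t ^ 3)) =
          (1 - 4 * t) / (2 * t ^ 2) by field_simp; ring]
        have : 0 ≤ 1 - 4 * t := by linarith
        positivity
    _ ≤ π ^ 2 / 8 / t ^ 2 - 2 / t := by gcongr
    _ = (π ^ 2 / 6 / t ^ 2 - 2 / t) - π ^ 2 / 6 / (2 * t) ^ 2 := by field_simp; ring
    _ ≤ aFun t - aFun (2 * t) := sub_le_sub (le_aFun ht) (aFun_le_s18 (by positivity))
    _ ≤ t * sigmaMoment 1 t := aFun_sub_aFun_two_mul_le ht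

end MomentBounds

section PartitionLowerBound

open Real Finset
open scoped ArithmeticFunction.sigma Nat

/-- The constant `c = π/√6` of the Hardy–Ramanujan formula `log p(n) ~ 2c√n`. -/
noncomputable def hrConst : ℝ := π / √6

/-- The minorant `e^{2c√u}/u^K` of the partition function, up to a constant factor. For `K ≠ 0` its
value at `u = 0` is the junk value `0`. -/
noncomputable def hrGrowth (K : ℕ) (u : ℝ) : ℝ := exp (2 * hrConst * √u) / u ^ K

/-- The leading-order approximation `c/√n` to the saddle point `d_n`. -/
noncomputable def saddleScale (n : ℝ) : ℝ := hrConst / √n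

/-- The second-order factor `w` in `hrGrowth K (n - x) ≥ hrGrowth K n * e^{-xt} * w`, where
`t = saddleScale n`: the first factor accounts for the concavity of the square root and the
second for the denominator `u^K`. -/
noncomputable def saddleWeight (K : ℕ) (n x : ℝ) : ℝ :=
  (1 - saddleScale n * x ^ 2 / n) * (1 + K * (x / n))

theorem hrConst_pos : 0 < hrConst := div_pos pi_pos (by positivity)

theorem hrConst_sq : hrConst ^ 2 = π ^ 2 / 6 := by
  rw [hrConst, div_pow, sq_sqrt (by norm_num)]

theorem one_le_hrConst : 1 ≤ hrConst := by
  rw [hrConst, one_le_div (by positivity), sqrt_le_left pi_pos.le]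
  nlinarith [pi_gt_three]

theorem hrGrowth_nonneg (K : ℕ) {u : ℝ} (hu : 0 ≤ u) : 0 ≤ hrGrowth K u := by
  unfold hrGrowth; positivity

theorem saddleScale_pos {n : ℝ} (hn : 0 < n) : 0 < saddleScale n :=
  div_pos hrConst_pos (sqrt_pos.2 hn)

theorem saddleScale_sq {n : ℝ} (hn : 0 ≤ n) : saddleScale n ^ 2 = hrConst ^ 2 / n := by
  rw [saddleScale, div_pow, sq_sqrt hn]

theorem hrConst_sq_div_saddleScale_sq {n : ℝ} (hn : 0 < n) :
    hrConst ^ 2 / saddleScale n ^ 2 = n := by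
  rw [saddleScale_sq hn.le, div_div_cancel₀ (pow_ne_zero 2 hrConst_pos.ne')]

theorem saddleScale_mul (n : ℝ) : saddleScale n * n = hrConst * √n := by
  rw [saddleScale, div_mul_eq_mul_div, mul_div_assoc, div_sqrt]

theorem tendsto_saddleScale : Tendsto (fun n : ℕ => saddleScale n) atTop (𝓝 0) :=
  tendsto_const_nhds.div_atTop (tendsto_sqrt_atTop.comp tendsto_natCast_atTop_atTop)

theorem saddleWeight_nonpos (K : ℕ) {n x : ℝ} (hn : 1 ≤ n) (hx : n ≤ x) :
    saddleWeight K n x ≤ 0 := by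
  have hn0 : 0 < n := by linarith
  have hscale : 1 ≤ saddleScale n * n := by
    rw [saddleScale_mul]
    exact one_le_mul_of_one_le_of_one_le one_le_hrConst (one_le_sqrt.2 hn)
  have hx0 : 0 ≤ x := by linarith
  refine mul_nonpos_of_nonpos_of_nonneg ?_ (by positivity)
  rw [sub_nonpos, le_div_iff₀ hn0]
  calc 1 * n ≤ (saddleScale n * n) * n := by gcongr
    _ = saddleScale n * n ^ 2 := by ring
    _ ≤ saddleScale n * x ^ 2 := by have := saddleScale_pos hn0; gcongr

theorem two_hrConst_mul_sqrt_sub_ge {n x : ℝ} (hn : 0 < n) (hxn : x ≤ n) :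
    2 * hrConst * √n - x * saddleScale n - saddleScale n * x ^ 2 / n ≤
      2 * hrConst * √(n - x) := by
  have ha : 0 < √n := sqrt_pos.2 hn
  have hb : 0 ≤ √(n - x) := sqrt_nonneg _
  have hc := hrConst_pos
  rw [saddleScale]
  have ha2 : √n ^ 2 = n := sq_sqrt hn.le
  have hb2 : √(n - x) ^ 2 = n - x := sq_sqrt (by linarith)
  generalize √n = a at *
  generalize √(n - x) = b at *
  obtain rfl : x = a ^ 2 - b ^ 2 := by linarith
  rw [← sub_nonneg, ← ha2]
  have : 2 * hrConst * b - (2 * hrConst * a - (a ^ 2 - b ^ 2) * (hrConst / a) -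
      hrConst / a * (a ^ 2 - b ^ 2) ^ 2 / a ^ 2) =
        hrConst / a ^ 3 * (a - b) ^ 2 * (2 * a * b + b ^ 2) := by field_simp; ring
  rw [this]
  positivity

theorem one_add_mul_div_mul_sub_pow_le (K : ℕ) {n x : ℝ} (hn : 0 < n) (hx : 0 ≤ x) (hxn : x ≤ n) :
    (1 + K * (x / n)) * (n - x) ^ K ≤ n ^ K := by
  have : 0 ≤ n - x := by linarith
  have hdiv : 0 ≤ x / n := by positivity
  calc (1 + K * (x / n)) * (n - x) ^ K
      ≤ (1 + x / n) ^ K * (n - x) ^ K := by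
        gcongr; exact one_add_mul_le_pow (by linarith) K
    _ = (n - x ^ 2 / n) ^ K := by rw [← mul_pow]; congr 1; field_simp; ring
    _ ≤ n ^ K := by
        have : n - x ^ 2 / n = (1 + x / n) * (n - x) := by field_simp; ring
        gcongr
        · rw [this]; positivity
        · exact sub_le_self _ (by positivity)

theorem hrGrowth_mul_exp_mul_saddleWeight_le (K : ℕ) {n x : ℝ} (hn : 1 ≤ n) (hx : 0 ≤ x)
    (hxn : x ≤ n) :
    hrGrowth K n * (exp (-(x * saddleScale n)) * saddleWeight K n x) ≤ hrGrowth K (n - x) := by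
  have hn0 : 0 < n := by linarith
  rcases hxn.eq_or_lt with rfl | hlt
  · exact (mul_nonpos_of_nonneg_of_nonpos (hrGrowth_nonneg K hx)
      (mul_nonpos_of_nonneg_of_nonpos (exp_pos _).le (saddleWeight_nonpos K hn le_rfl))).trans
      (hrGrowth_nonneg K (sub_nonneg.2 le_rfl))
  have : 0 < n - x := by linarith
  have hexp : exp (2 * hrConst * √n) * exp (-(x * saddleScale n)) *
      (1 - saddleScale n * x ^ 2 / n) ≤ exp (2 * hrConst * √(n - x)) :=
    calc exp (2 * hrConst * √n) * exp (-(x * saddleScale n)) * (1 - saddleScale n * x ^ 2 / n)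
        ≤ exp (2 * hrConst * √n) * exp (-(x * saddleScale n)) *
            exp (-(saddleScale n * x ^ 2 / n)) := by
          gcongr; linarith [add_one_le_exp (-(saddleScale n * x ^ 2 / n))]
      _ ≤ exp (2 * hrConst * √(n - x)) := by
          rw [← exp_add, ← exp_add, exp_le_exp]
          linarith [two_hrConst_mul_sqrt_sub_ge hn0 hxn]
  have hpow : (1 + K * (x / n)) / n ^ K ≤ 1 / (n - x) ^ K := by
    rw [div_le_div_iff₀ (by positivity) (by positivity), one_mul]
    exact one_add_mul_div_mul_sub_pow_le K hn0 hx hxn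
  calc hrGrowth K n * (exp (-(x * saddleScale n)) * saddleWeight K n x)
      = exp (2 * hrConst * √n) * exp (-(x * saddleScale n)) * (1 - saddleScale n * x ^ 2 / n) *
          ((1 + K * (x / n)) / n ^ K) := by unfold hrGrowth saddleWeight; ring
    _ ≤ exp (2 * hrConst * √(n - x)) * (1 / (n - x) ^ K) := by gcongr
    _ = hrGrowth K (n - x) := mul_one_div _ _

theorem hasSum_sigma_mul_saddleWeight (K : ℕ) {n : ℝ} (hn : 0 < n) :
    HasSum (fun m : ℕ => σ 1 m * (exp (-(m * saddleScale n)) * saddleWeight K n m))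
      (sigmaMoment 0 (saddleScale n) + K / n * sigmaMoment 1 (saddleScale n) -
        saddleScale n / n * sigmaMoment 2 (saddleScale n) -
        K * saddleScale n / n ^ 2 * sigmaMoment 3 (saddleScale n)) := by
  have hmoment (r : ℕ) := (summable_sigmaMoment r (saddleScale_pos hn)).hasSum
  convert! (((hmoment 0).add ((hmoment 1).mul_left _)).sub ((hmoment 2).mul_left _)).sub
    ((hmoment 3).mul_left _) using 2 with m
  unfold saddleWeight
  field_simp
  ring

theorem saddleScale_div_mul_sigmaMoment_two_le {n : ℝ} (hn : 0 < n) :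
    saddleScale n / n * sigmaMoment 2 (saddleScale n) ≤ 32 / saddleScale n := by
  have ht := saddleScale_pos hn
  have hnt := hrConst_sq_div_saddleScale_sq hn
  have hc := hrConst_pos
  generalize saddleScale n = t at *
  subst hnt
  calc t / (hrConst ^ 2 / t ^ 2) * sigmaMoment 2 t
      ≤ t / (hrConst ^ 2 / t ^ 2) * (2 ! * 2 ^ (2 + 2) * (π ^ 2 / 6) / t ^ (2 + 2)) := by
        gcongr; exact sigmaMoment_le 2 ht
    _ = 32 / t := by rw [← hrConst_sq, Nat.factorial_two]; push_cast; field_simp; norm_num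

theorem saddleScale_div_sq_mul_sigmaMoment_three_le {n : ℝ} (hn : 0 < n) :
    saddleScale n / n ^ 2 * sigmaMoment 3 (saddleScale n) ≤ 192 / hrConst ^ 2 := by
  have ht := saddleScale_pos hn
  have hnt := hrConst_sq_div_saddleScale_sq hn
  have hc := hrConst_pos
  generalize saddleScale n = t at *
  subst hnt
  calc t / (hrConst ^ 2 / t ^ 2) ^ 2 * sigmaMoment 3 t
      ≤ t / (hrConst ^ 2 / t ^ 2) ^ 2 * (3 ! * 2 ^ (3 + 2) * (π ^ 2 / 6) / t ^ (3 + 2)) := by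
        gcongr; exact sigmaMoment_le 3 ht
    _ = 192 / hrConst ^ 2 := by
        rw [← hrConst_sq, show 3 ! = 6 from rfl]; push_cast; field_simp; norm_num

theorem one_div_le_one_div_mul_sigmaMoment_one {n : ℝ} (hn : 0 < n)
    (hscale : saddleScale n ≤ 1 / 4) :
    1 / (2 * hrConst ^ 2 * saddleScale n) ≤ 1 / n * sigmaMoment 1 (saddleScale n) := by
  have ht := saddleScale_pos hn
  have hc := hrConst_pos
  calc 1 / (2 * hrConst ^ 2 * saddleScale n) = 1 / n * (1 / (2 * saddleScale n ^ 3)) := by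
        nth_rw 2 [← hrConst_sq_div_saddleScale_sq hn]; field_simp
    _ ≤ 1 / n * sigmaMoment 1 (saddleScale n) := by gcongr; exact le_sigmaMoment_one ht hscale

theorem sub_two_div_saddleScale_le_sigmaMoment_zero {n : ℝ} (hn : 0 < n) :
    n - 2 / saddleScale n ≤ sigmaMoment 0 (saddleScale n) := by
  have ht := saddleScale_pos hn
  nth_rw 1 [← aFun_eq_sigmaMoment_zero ht, ← hrConst_sq_div_saddleScale_sq hn, hrConst_sq]
  exact le_aFun ht

theorem le_tsum_sigma_mul_saddleWeight {K : ℕ} (hK : 136 * hrConst ^ 2 ≤ K) {n : ℝ} (hn : 0 < n)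
    (hscale : saddleScale n ≤ 1 / 768) :
    n ≤ ∑' m : ℕ, σ 1 m * (exp (-(m * saddleScale n)) * saddleWeight K n m) := by
  rw [(hasSum_sigma_mul_saddleWeight K hn).tsum_eq]
  have hzero := sub_two_div_saddleScale_le_sigmaMoment_zero hn
  have hone := mul_le_mul_of_nonneg_left (one_div_le_one_div_mul_sigmaMoment_one hn (by linarith))
    K.cast_nonneg
  have htwo := saddleScale_div_mul_sigmaMoment_two_le hn
  have hthree := mul_le_mul_of_nonneg_left (saddleScale_div_sq_mul_sigmaMoment_three_le hn)
    K.cast_nonneg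
  have hc := hrConst_pos
  have ht := saddleScale_pos hn
  generalize saddleScale n = t at *
  have hgain : 2 / t + 32 / t + K * (192 / hrConst ^ 2) ≤ K * (1 / (2 * hrConst ^ 2 * t)) := by
    rw [← sub_nonneg, show K * (1 / (2 * hrConst ^ 2 * t)) -
        (2 / t + 32 / t + K * (192 / hrConst ^ 2)) =
      (K * (1 - 384 * t) - 68 * hrConst ^ 2) / (2 * hrConst ^ 2 * t) by field_simp; ring]
    have : 0 ≤ K * (1 - 384 * t) - 68 * hrConst ^ 2 := by nlinarith
    positivity
  linear_combination hzero + hone + htwo + hthree + hgain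

theorem tsum_sigma_mul_saddleWeight_le_sum (K : ℕ) {n : ℕ} (hn : 1 ≤ n) :
    ∑' m : ℕ, σ 1 m * (exp (-(m * saddleScale n)) * saddleWeight K n m) ≤
      ∑ m ∈ Ioc 0 n, σ 1 m * (exp (-(m * saddleScale n)) * saddleWeight K n m) := by
  have hn0 : (0 : ℝ) < n := mod_cast hn
  have hsummable := (hasSum_sigma_mul_saddleWeight K hn0).summable
  refine neg_le_neg_iff.1 ?_
  rw [← tsum_neg, ← sum_neg_distrib]
  refine hsummable.neg.sum_le_tsum _ fun m hm => neg_nonneg.2 ?_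
  rcases Nat.eq_zero_or_pos m with rfl | hm0
  · simp
  · have hmn : n ≤ m := by simp only [mem_Ioc] at hm; lia
    exact mul_nonpos_of_nonneg_of_nonpos (Nat.cast_nonneg _)
      (mul_nonpos_of_nonneg_of_nonpos (exp_pos _).le
        (saddleWeight_nonpos K (mod_cast hn) (mod_cast hmn)))

theorem exists_eventually_mul_hrGrowth_le :
    ∃ K : ℕ, ∀ᶠ n : ℕ in atTop,
      n * hrGrowth K n ≤ ∑ m ∈ Ioc 0 n, σ 1 m * hrGrowth K ((n - m : ℕ) : ℝ) := by
  obtain ⟨K, hK⟩ := exists_nat_ge (136 * hrConst ^ 2)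
  refine ⟨K, ?_⟩
  filter_upwards [eventually_ge_atTop 1,
    tendsto_saddleScale.eventually_le_const (show (0 : ℝ) < 1 / 768 by norm_num)] with n hn hscale
  have hn1 : (1 : ℝ) ≤ n := mod_cast hn
  calc n * hrGrowth K n
      ≤ (∑ m ∈ Ioc 0 n, σ 1 m * (exp (-(m * saddleScale n)) * saddleWeight K n m)) *
          hrGrowth K n := by
        gcongr
        · exact hrGrowth_nonneg K n.cast_nonneg
        · exact (le_tsum_sigma_mul_saddleWeight hK (by linarith) hscale).trans
            (tsum_sigma_mul_saddleWeight_le_sum K hn)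
    _ = ∑ m ∈ Ioc 0 n, σ 1 m *
          (hrGrowth K n * (exp (-(m * saddleScale n)) * saddleWeight K n m)) := by
        rw [sum_mul]; exact sum_congr rfl fun m _ => by ring
    _ ≤ ∑ m ∈ Ioc 0 n, σ 1 m * hrGrowth K ((n - m : ℕ) : ℝ) := by
        refine sum_le_sum fun m hm => ?_
        have hmn := (mem_Ioc.1 hm).2
        rw [Nat.cast_sub hmn]
        gcongr
        exact hrGrowth_mul_exp_mul_saddleWeight_le K hn1 m.cast_nonneg (mod_cast hmn)

theorem exists_mul_le_card_partition {f : ℕ → ℝ} (hf : ∀ n, 0 ≤ f n)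
    (hrec : ∀ᶠ n : ℕ in atTop, n * f n ≤ ∑ m ∈ Ioc 0 n, σ 1 m * f (n - m)) :
    ∃ A : ℝ, 0 < A ∧ ∀ n, A * f n ≤ Fintype.card (Nat.Partition n) := by
  obtain ⟨N, hN⟩ := eventually_atTop.1 (hrec.and (eventually_gt_atTop 0))
  have hB : 0 < 1 + ∑ m ∈ range N, f m :=
    add_pos_of_pos_of_nonneg one_pos (sum_nonneg fun m _ => hf m)
  refine ⟨(1 + ∑ m ∈ range N, f m)⁻¹, by positivity, fun n => ?_⟩
  induction n using Nat.strong_induction_on with | _ n ih =>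
  rcases lt_or_ge n N with hlt | hge
  · calc (1 + ∑ m ∈ range N, f m)⁻¹ * f n ≤ 1 := by
          rw [inv_mul_le_iff₀ hB, mul_one]
          linarith [single_le_sum (fun m _ => hf m) (mem_range.2 hlt)]
      _ ≤ Fintype.card (Nat.Partition n) := mod_cast Fintype.card_pos
  · obtain ⟨hfn, hn0⟩ := hN n hge
    refine le_of_mul_le_mul_left ?_ (show (0 : ℝ) < n from mod_cast hn0)
    set A := (1 + ∑ m ∈ range N, f m)⁻¹
    calc n * (A * f n) = A * (n * f n) := by ring
      _ ≤ A * ∑ m ∈ Ioc 0 n, σ 1 m * f (n - m) := by gcongr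
      _ = ∑ m ∈ Ioc 0 n, σ 1 m * (A * f (n - m)) := by
          rw [mul_sum]; exact sum_congr rfl fun m _ => by ring
      _ ≤ ∑ m ∈ Ioc 0 n, σ 1 m * (Fintype.card (Nat.Partition (n - m)) : ℝ) := by
          refine sum_le_sum fun m hm => ?_
          gcongr
          exact ih _ (Nat.sub_lt hn0 (mem_Ioc.1 hm).1)
      _ = n * Fintype.card (Nat.Partition n) := mod_cast sum_sigma_mul_card_partition n

theorem exists_mul_hrGrowth_le_card_partition :
    ∃ (K : ℕ) (A : ℝ), 0 < A ∧ ∀ n : ℕ, A * hrGrowth K n ≤ Fintype.card (Nat.Partition n) := by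
  obtain ⟨K, hK⟩ := exists_eventually_mul_hrGrowth_le
  exact ⟨K, exists_mul_le_card_partition (fun n => hrGrowth_nonneg K n.cast_nonneg) hK⟩

end PartitionLowerBound

section SaddlePoint

open Real

theorem hasSum_pow_succ {K : Type*} [NormedField K] {x : K} (hx : ‖x‖ < 1) :
    HasSum (fun j : ℕ => x ^ (j + 1)) (x / (1 - x)) := by
  simpa only [pow_succ', div_eq_mul_inv] using (hasSum_geometric_of_norm_lt_one hx).mul_left x

theorem hasSum_exp_neg_succ_mul_s18 {s : ℝ} (hs : 0 < s) :
    HasSum (fun j : ℕ => exp (-((j + 1) * s))) (exp (-s) / (1 - exp (-s))) := by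
  simpa only [← exp_neg_natCast_mul, Nat.cast_add_one] using
    hasSum_pow_succ (norm_exp_neg_lt_one hs)

theorem exp_neg_div_one_sub_exp_neg_le {s : ℝ} (hs : 0 < s) :
    exp (-s) / (1 - exp (-s)) ≤ 1 / s := by
  rw [div_le_div_iff₀ (by simpa using hs) hs, exp_neg]
  have := add_one_le_exp s
  field_simp
  linarith

/-- The logarithm `Σ_j -log (1 - q^j)` of the Euler product `g(q)`. -/
noncomputable def logEuler (q : ℝ) : ℝ := ∑' j : ℕ, -log (1 - q ^ (j + 1))

theorem sum_range_neg_log_one_sub_exp_le {s : ℝ} (hs : 0 < s) (n : ℕ) :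
    ∑ j ∈ Finset.range n, -log (1 - exp (-s) ^ (j + 1)) ≤ π ^ 2 / 6 / s := by
  have hlog (j : ℕ) : HasSum (fun k : ℕ => exp (-((j + 1) * ((k + 1) * s))) / (k + 1))
      (-log (1 - exp (-s) ^ (j + 1))) := by
    rw [← exp_neg_natCast_mul, Nat.cast_add_one]
    refine (hasSum_pow_div_log_of_abs_lt_one
      (norm_exp_neg_lt_one (by positivity : 0 < ((j : ℝ) + 1) * s))).congr_fun fun k => ?_
    rw [← exp_neg_natCast_mul, Nat.cast_add_one, mul_left_comm]
  refine hasSum_le (fun k => ?_) (hasSum_sum fun j _ => hlog j)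
    (by simpa only [mul_one, one_pow, div_one] using (hasSum_one_div_succ_mul_sq 1).div_const s)
  have hks : 0 < ((k : ℝ) + 1) * s := by positivity
  calc ∑ j ∈ Finset.range n, exp (-((j + 1) * ((k + 1) * s))) / (k + 1)
      ≤ 1 / ((k + 1) * s) / (k + 1) := by
        rw [← Finset.sum_div]
        gcongr
        exact (sum_le_hasSum _ (fun _ _ => (exp_pos _).le) (hasSum_exp_neg_succ_mul_s18 hks)).trans
          (exp_neg_div_one_sub_exp_neg_le hks)
    _ = 1 / (k + 1) ^ 2 / s := by field_simp

theorem neg_log_one_sub_nonneg {x : ℝ} (hx : 0 ≤ x) (hx1 : x < 1) : 0 ≤ -log (1 - x) :=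
  neg_nonneg.2 (log_nonpos (by linarith) (by linarith))

theorem logEuler_exp_neg_le {s : ℝ} (hs : 0 < s) : logEuler (exp (-s)) ≤ π ^ 2 / 6 / s :=
  Real.tsum_le_of_sum_range_le
    (fun _ => neg_log_one_sub_nonneg (by positivity) (pow_lt_one₀ (exp_pos _).le
      (by simpa using hs) (Nat.succ_ne_zero _)))
    (sum_range_neg_log_one_sub_exp_le hs)

theorem summable_neg_log_one_sub_pow {q : ℝ} (hq : ‖q‖ < 1) :
    Summable fun j : ℕ => -log (1 - q ^ (j + 1)) := by
  simpa only [← sub_eq_add_neg] using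
    (summable_log_one_add_of_summable (hasSum_pow_succ hq).summable.neg).neg

theorem summable_aFun {d : ℝ} (hd : 0 < d) :
    Summable fun j : ℕ => (j + 1 : ℝ) * exp (-(j + 1) * d) / (1 - exp (-(j + 1) * d)) := by
  have h := (summable_norm_pow_mul_geometric_div_one_sub 1 (norm_exp_neg_lt_one hd)).comp_injective
    (add_left_injective 1)
  simpa only [Function.comp_def, ← exp_neg_natCast_mul, pow_one, Nat.cast_add_one, neg_mul] using h

theorem neg_log_one_sub_exp_neg_le {x y : ℝ} (hx : 0 < x) (hy : 0 < y) :
    -log (1 - exp (-x)) ≤ -log (1 - exp (-y)) + (y - x) * (exp (-x) / (1 - exp (-x))) := by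
  have hx1 : 0 < 1 - exp (-x) := by simpa using hx
  have hy1 : 0 < 1 - exp (-y) := by simpa using hy
  have hlog := log_le_sub_one_of_pos (div_pos hy1 hx1)
  rw [log_div hy1.ne' hx1.ne'] at hlog
  have hexp : exp (-x) - exp (-y) ≤ (y - x) * exp (-x) := by
    have hfactor : exp (-y) = exp (-x) * exp (-(y - x)) := by rw [← exp_add]; ring_nf
    nlinarith [add_one_le_exp (-(y - x)), exp_pos (-x)]
  have hslope : (1 - exp (-y)) / (1 - exp (-x)) - 1 ≤ (y - x) * (exp (-x) / (1 - exp (-x))) := by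
    rw [div_sub_one hx1.ne', ← mul_div_assoc]
    gcongr
    linarith
  linarith

theorem logEuler_exp_neg_le_add {d s : ℝ} (hd : 0 < d) (hs : 0 < s) :
    logEuler (exp (-d)) ≤ logEuler (exp (-s)) + (s - d) * aFun d := by
  have hsummable {t : ℝ} (ht : 0 < t) := summable_neg_log_one_sub_pow (norm_exp_neg_lt_one ht)
  have haFun := (summable_aFun hd).mul_left (s - d)
  rw [logEuler, logEuler, aFun, ← tsum_mul_left, ← (hsummable hs).tsum_add haFun]
  refine (hsummable hd).tsum_le_tsum (fun j => ?_) ((hsummable hs).add haFun)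
  rw [← exp_neg_natCast_mul, ← exp_neg_natCast_mul, neg_mul]
  push_cast
  refine (neg_log_one_sub_exp_neg_le (x := (j + 1) * d) (y := (j + 1) * s) (by positivity)
    (by positivity)).trans_eq ?_
  ring

theorem mul_add_logEuler_exp_neg_le {d n : ℝ} (hd : 0 < d) (hn : 0 < n) (h : aFun d = n) :
    n * d + logEuler (exp (-d)) ≤ 2 * hrConst * √n := by
  have hs := saddleScale_pos hn
  have htangent := logEuler_exp_neg_le_add hd hs
  have hbound := logEuler_exp_neg_le hs
  have hvalue : π ^ 2 / 6 / saddleScale n = saddleScale n * n := by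
    rw [← hrConst_sq, div_eq_iff hs.ne', mul_right_comm, ← sq, saddleScale_sq hn.le,
      div_mul_cancel₀ _ hn.ne']
  rw [h] at htangent
  linarith [saddleScale_mul n]

end SaddlePoint

section EulerProduct

open Real

theorem norm_one_sub_sq (w : ℂ) : ‖1 - w‖ ^ 2 = (1 - ‖w‖) ^ 2 + 2 * (‖w‖ - w.re) := by
  have hw : ‖w‖ ^ 2 = w.re * w.re + w.im * w.im := by
    rw [← Complex.normSq_eq_norm_sq, Complex.normSq_apply]
  rw [← Complex.normSq_eq_norm_sq, Complex.normSq_apply, Complex.sub_re, Complex.sub_im,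
    Complex.one_re, Complex.one_im]
  linear_combination -hw

theorem one_sub_norm_mul_exp_le_norm_one_sub {w : ℂ} (hw : ‖w‖ ≤ 1) :
    (1 - ‖w‖) * exp ((‖w‖ - w.re) / 4) ≤ ‖1 - w‖ := by
  have hgap0 : 0 ≤ ‖w‖ - w.re := sub_nonneg.2 (Complex.re_le_norm w)
  have hgap2 : ‖w‖ - w.re ≤ 2 := by
    linarith [neg_le_of_abs_le (Complex.abs_re_le_norm w)]
  have hexp : exp ((‖w‖ - w.re) / 2) ≤ 1 + (‖w‖ - w.re) := by
    have habs := abs_of_nonneg (div_nonneg hgap0 zero_le_two)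
    have := le_of_abs_le (abs_exp_sub_one_le (x := (‖w‖ - w.re) / 2) (by rw [habs]; linarith))
    linarith
  refine le_of_sq_le_sq ?_ (norm_nonneg _)
  calc ((1 - ‖w‖) * exp ((‖w‖ - w.re) / 4)) ^ 2
      = (1 - ‖w‖) ^ 2 * exp ((‖w‖ - w.re) / 2) := by rw [mul_pow, ← exp_nat_mul]; ring_nf
    _ ≤ (1 - ‖w‖) ^ 2 * (1 + (‖w‖ - w.re)) := by gcongr
    _ = (1 - ‖w‖) ^ 2 + (1 - ‖w‖) ^ 2 * (‖w‖ - w.re) := mul_one_add _ _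
    _ ≤ (1 - ‖w‖) ^ 2 + 2 * (‖w‖ - w.re) := by gcongr; nlinarith [norm_nonneg w]
    _ = ‖1 - w‖ ^ 2 := (norm_one_sub_sq w).symm

theorem multipliable_inv_one_sub_pow {z : ℂ} (hz : ‖z‖ < 1) :
    Multipliable fun j : ℕ => (1 - z ^ (j + 1))⁻¹ := by
  refine (ModularForm.multipliable_one_sub_pow hz).inv₀ ?_
  simp only [sub_eq_add_neg]
  refine tprod_one_add_ne_zero_of_summable (fun j hj => ?_) (hasSum_pow_succ hz).summable.neg.norm
  have hlt := pow_lt_one₀ (norm_nonneg z) hz j.succ_ne_zero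
  rw [← norm_pow, ← sub_eq_zero.1 ((sub_eq_add_neg _ _).trans hj), norm_one] at hlt
  exact hlt.false

theorem hasSum_norm_pow_sub_re_pow {z : ℂ} (hz : ‖z‖ < 1) :
    HasSum (fun j : ℕ => ‖z‖ ^ (j + 1) - (z ^ (j + 1)).re)
      ((1 + ‖z‖) * (‖z‖ - z.re) / ((1 - ‖z‖) * ‖1 - z‖ ^ 2)) := by
  have hnorm : ‖‖z‖‖ < 1 := by rwa [norm_norm]
  convert! (hasSum_pow_succ hnorm).sub (Complex.hasSum_re (hasSum_pow_succ hz)) using 1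
  have hre : (z / (1 - z)).re = (z.re - ‖z‖ ^ 2) / ‖1 - z‖ ^ 2 := by
    rw [div_eq_mul_inv, Complex.mul_re, Complex.inv_re, Complex.inv_im, ← Complex.normSq_eq_norm_sq,
      ← Complex.normSq_eq_norm_sq, Complex.normSq_apply z, Complex.sub_re, Complex.sub_im,
      Complex.one_re, Complex.one_im]
    ring
  have hne : ‖1 - z‖ ^ 2 ≠ 0 := by
    rw [norm_one_sub_sq]
    have := sub_pos.2 hz
    have := sub_nonneg.2 (Complex.re_le_norm z)
    positivity
  rw [hre, div_sub_div _ _ (sub_pos.2 hz).ne' hne]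
  congr 1
  linear_combination -‖z‖ * norm_one_sub_sq z

theorem norm_gC_le {z : ℂ} (hz : ‖z‖ < 1) :
    ‖gC z‖ ≤ exp (logEuler ‖z‖ - (∑' j : ℕ, (‖z‖ ^ (j + 1) - (z ^ (j + 1)).re)) / 4) := by
  have hexponent := (summable_neg_log_one_sub_pow (norm_norm z ▸ hz)).hasSum.sub
    ((hasSum_norm_pow_sub_re_pow hz).summable.hasSum.div_const 4)
  refine le_of_tendsto_of_tendsto' (multipliable_inv_one_sub_pow hz).hasProd.norm
    ((continuous_exp.tendsto _).comp hexponent) fun s => ?_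
  rw [Function.comp_apply, exp_sum]
  refine Finset.prod_le_prod (fun _ _ => norm_nonneg _) fun j _ => ?_
  have hlt : ‖z ^ (j + 1)‖ < 1 := norm_pow z _ ▸ pow_lt_one₀ (norm_nonneg z) hz j.succ_ne_zero
  have hpos : 0 < 1 - ‖z ^ (j + 1)‖ := sub_pos.2 hlt
  rw [← norm_pow, norm_inv, sub_eq_add_neg (-log _), exp_add, exp_neg, exp_log hpos, exp_neg,
    ← mul_inv]
  gcongr
  exact one_sub_norm_mul_exp_le_norm_one_sub hlt.le

theorem norm_exp_neg_add_mul_I (d θ : ℝ) : ‖Complex.exp (-d + θ * Complex.I)‖ = exp (-d) := by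
  rw [Complex.norm_exp]; simp

theorem re_exp_neg_add_mul_I (d θ : ℝ) :
    (Complex.exp (-d + θ * Complex.I)).re = exp (-d) * cos θ := by
  rw [Complex.exp_re]; simp

theorem sq_div_le_one_sub_cos {δ θ : ℝ} (hδ : 0 ≤ δ) (hδθ : δ ≤ |θ|) (hθ : |θ| ≤ π) :
    δ ^ 2 / 5 ≤ 1 - cos θ := by
  have hpi : π ^ 2 ≤ 10 := by nlinarith [pi_lt_d2, pi_pos]
  calc δ ^ 2 / 5 ≤ 2 / π ^ 2 * δ ^ 2 := by
        rw [div_mul_eq_mul_div, div_le_div_iff₀ (by norm_num) (by positivity)]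
        nlinarith [sq_nonneg δ]
    _ ≤ 2 / π ^ 2 * θ ^ 2 := by rw [← sq_abs θ]; gcongr
    _ ≤ 1 - cos θ := by linarith [cos_le_one_sub_mul_cos_sq hθ]

theorem one_third_le_exp_neg {d : ℝ} (hd : d ≤ 1) : 1 / 3 ≤ exp (-d) := by
  rw [exp_neg, one_div]
  gcongr
  exact (exp_le_exp.2 hd).trans exp_one_lt_three.le

theorem le_tsum_norm_pow_sub_re_pow {d δ θ : ℝ} (hd : 0 < d) (hd1 : d ≤ 1) (hδ : 0 ≤ δ)
    (hδd : δ ≤ d) (hδθ : δ ≤ |θ|) (hθ : |θ| ≤ π) :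
    δ ^ 2 / (20 * d ^ 3) ≤
      ∑' j : ℕ, (‖Complex.exp (-d + θ * Complex.I)‖ ^ (j + 1) -
        (Complex.exp (-d + θ * Complex.I) ^ (j + 1)).re) := by
  have hz : ‖Complex.exp (-d + θ * Complex.I)‖ < 1 := by
    rw [norm_exp_neg_add_mul_I]; simpa using hd
  rw [(hasSum_norm_pow_sub_re_pow hz).tsum_eq, norm_one_sub_sq, re_exp_neg_add_mul_I,
    norm_exp_neg_add_mul_I, ← mul_one_sub]
  have hgap : δ ^ 2 / 15 ≤ exp (-d) * (1 - cos θ) := by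
    nlinarith [one_third_le_exp_neg hd1, sq_div_le_one_sub_cos hδ hδθ hθ, sq_nonneg δ]
  have hq : 0 < 1 - exp (-d) := by simpa using hd
  have hqd : 1 - exp (-d) ≤ d := by linarith [add_one_le_exp (-d)]
  generalize exp (-d) * (1 - cos θ) = u at hgap ⊢
  have hu : 0 ≤ u := le_trans (by positivity) hgap
  calc δ ^ 2 / (20 * d ^ 3)
      ≤ 1 * u / (d * (d ^ 2 + 2 * u)) := by
        rw [div_le_div_iff₀ (by positivity) (by positivity)]
        have : δ ^ 2 * (d ^ 2 + 2 * u) ≤ 20 * u * d ^ 2 := by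
          have : δ ^ 2 ≤ d ^ 2 := by gcongr
          nlinarith [sq_nonneg d]
        nlinarith
    _ ≤ (1 + exp (-d)) * u / ((1 - exp (-d)) * ((1 - exp (-d)) ^ 2 + 2 * u)) := by
        gcongr
        linarith [exp_pos (-d)]

end EulerProduct

section TailIntegral

open Real
open scoped Nat

theorem half_le_one_sub_exp_neg {d : ℝ} (hd : 0 ≤ d) (hd1 : d ≤ 1) : d / 2 ≤ 1 - exp (-d) := by
  have hinv : exp (-d) * exp d = 1 := by rw [← exp_add, neg_add_cancel, exp_zero]
  nlinarith [add_one_le_exp d, exp_pos (-d)]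

theorem half_le_norm_one_sub_pow {z : ℂ} {d : ℝ} (hd : 0 ≤ d) (hd1 : d ≤ 1)
    (hz : ‖z‖ = exp (-d)) (j : ℕ) : d / 2 ≤ ‖1 - z ^ (j + 1)‖ :=
  calc d / 2 ≤ 1 - exp (-d) := half_le_one_sub_exp_neg hd hd1
    _ ≤ 1 - ‖z ^ (j + 1)‖ := by
        rw [norm_pow, hz]
        gcongr
        exact pow_le_of_le_one (exp_pos _).le (by simpa using hd) j.succ_ne_zero
    _ ≤ ‖1 - z ^ (j + 1)‖ := by simpa using norm_sub_norm_le 1 (z ^ (j + 1))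

theorem norm_FC_le (m : ℕ) {z : ℂ} {d : ℝ} (hd : 0 < d) (hd1 : d ≤ 1) (hz : ‖z‖ = exp (-d)) :
    ‖FC m z‖ ≤ m ! * (2 / d) ^ (m + 2) := by
  have hterm (j : ℕ) : ‖(j + 1 : ℂ) ^ m * z ^ (j + 1) / (1 - z ^ (j + 1))‖ ≤
      m ! * (2 / d) ^ (m + 1) * exp (-((j + 1) * (d / 2))) := by
    have hcast : ‖(j + 1 : ℂ)‖ = j + 1 := mod_cast Complex.norm_natCast (j + 1)
    rw [norm_div, norm_mul, norm_pow, norm_pow, hcast, hz, ← exp_neg_natCast_mul, Nat.cast_add_one]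
    calc (j + 1 : ℝ) ^ m * exp (-((j + 1) * d)) / ‖1 - z ^ (j + 1)‖
        ≤ m ! * (2 / d) ^ m * exp (-((j + 1) * (d / 2))) / (d / 2) :=
          div_le_div₀ (by positivity) (pow_mul_exp_neg_mul_le (by positivity) hd m)
            (by positivity) (half_le_norm_one_sub_pow hd.le hd1 hz j)
      _ = m ! * (2 / d) ^ (m + 1) * exp (-((j + 1) * (d / 2))) := by rw [pow_succ]; field_simp
  have hd2 := half_pos hd
  calc ‖FC m z‖
      ≤ m ! * (2 / d) ^ (m + 1) * (exp (-(d / 2)) / (1 - exp (-(d / 2)))) :=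
        tsum_of_norm_bounded ((hasSum_exp_neg_succ_mul_s18 hd2).mul_left _) hterm
    _ ≤ m ! * (2 / d) ^ (m + 1) * (1 / (d / 2)) :=
        mul_le_mul_of_nonneg_left (exp_neg_div_one_sub_exp_neg_le hd2) (by positivity)
    _ = m ! * (2 / d) ^ (m + 2) := by rw [one_div_div, mul_assoc, ← pow_succ]

/-- The part `J₂` of the Cauchy integral for the `n`-th coefficient of `g F_m` over the circle
`|x| = e^{-d}` that comes from the arguments `δ ≤ |θ| ≤ π`. -/
noncomputable def tailIntegral (m n : ℕ) (d δ : ℝ) : ℂ :=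
  ((exp (n * d) / (2 * π) : ℝ) : ℂ) *
    ∫ θ in {θ : ℝ | δ ≤ |θ| ∧ |θ| ≤ π},
      gC (Complex.exp (-(d : ℂ) + θ * Complex.I)) *
        FC m (Complex.exp (-(d : ℂ) + θ * Complex.I)) * Complex.exp (-(θ * n) * Complex.I)

theorem norm_gC_mul_FC_le (m : ℕ) {d δ θ : ℝ} (hd : 0 < d) (hd1 : d ≤ 1) (hδ : 0 ≤ δ)
    (hδd : δ ≤ d) (hδθ : δ ≤ |θ|) (hθ : |θ| ≤ π) :
    ‖gC (Complex.exp (-(d : ℂ) + θ * Complex.I)) *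
        FC m (Complex.exp (-(d : ℂ) + θ * Complex.I))‖ ≤
      exp (logEuler (exp (-d)) - δ ^ 2 / (80 * d ^ 3)) * (m ! * (2 / d) ^ (m + 2)) := by
  have hz := norm_exp_neg_add_mul_I d θ
  have hgap := le_tsum_norm_pow_sub_re_pow hd hd1 hδ hδd hδθ hθ
  have hg := norm_gC_le (hz.trans_lt (by simpa using hd))
  have hF := norm_FC_le m hd hd1 hz
  rw [hz] at hg hgap
  rw [norm_mul]
  gcongr
  refine hg.trans (exp_le_exp.2 (sub_le_sub_left ?_ _))
  rw [le_div_iff₀ four_pos]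
  convert! hgap using 1
  field_simp
  ring

theorem volume_real_setOf_abs_mem_le (δ : ℝ) :
    MeasureTheory.volume.real {θ : ℝ | δ ≤ |θ| ∧ |θ| ≤ π} ≤ 2 * π := by
  calc MeasureTheory.volume.real {θ : ℝ | δ ≤ |θ| ∧ |θ| ≤ π}
      ≤ MeasureTheory.volume.real (Set.Icc (-π) π) :=
        MeasureTheory.measureReal_mono (fun θ hθ => abs_le.1 hθ.2) measure_Icc_lt_top.ne
    _ = 2 * π := by rw [volume_real_Icc_of_le (by linarith [pi_pos])]; ring

theorem norm_tailIntegral_le (m n : ℕ) {d δ : ℝ} (hd : 0 < d) (hd1 : d ≤ 1) (hδ : 0 ≤ δ)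
    (hδd : δ ≤ d) :
    ‖tailIntegral m n d δ‖ ≤
      exp (n * d + logEuler (exp (-d)) - δ ^ 2 / (80 * d ^ 3)) * (m ! * (2 / d) ^ (m + 2)) := by
  have hfinite : MeasureTheory.volume {θ : ℝ | δ ≤ |θ| ∧ |θ| ≤ π} < ⊤ :=
    (MeasureTheory.measure_mono fun θ hθ => abs_le.1 hθ.2).trans_lt measure_Icc_lt_top
  have hintegrand (θ : ℝ) (hθ : δ ≤ |θ| ∧ |θ| ≤ π) :
      ‖gC (Complex.exp (-(d : ℂ) + θ * Complex.I)) *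
          FC m (Complex.exp (-(d : ℂ) + θ * Complex.I)) * Complex.exp (-(θ * n) * Complex.I)‖ ≤
        exp (logEuler (exp (-d)) - δ ^ 2 / (80 * d ^ 3)) * (m ! * (2 / d) ^ (m + 2)) := by
    have hunit : ‖Complex.exp (-(θ * n) * Complex.I)‖ = 1 :=
      mod_cast Complex.norm_exp_ofReal_mul_I (-(θ * n))
    rw [norm_mul, hunit, mul_one]
    exact norm_gC_mul_FC_le m hd hd1 hδ hδd hθ.1 hθ.2
  have := pi_pos
  rw [tailIntegral, norm_mul, Complex.norm_real, norm_of_nonneg (by positivity)]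
  calc _ ≤ exp (n * d) / (2 * π) * (exp (logEuler (exp (-d)) - δ ^ 2 / (80 * d ^ 3)) *
          (m ! * (2 / d) ^ (m + 2)) * (2 * π)) := by
        gcongr
        refine (MeasureTheory.norm_setIntegral_le_of_norm_le_const hfinite hintegrand).trans ?_
        gcongr
        exact volume_real_setOf_abs_mem_le δ
    _ = _ := by rw [add_sub_assoc, exp_add]; field_simp

end TailIntegral

section SaddleAsymptotics

open Real
open scoped Nat

theorem aFun_mul_sq_le_two {d : ℝ} (hd : 0 < d) : aFun d * d ^ 2 ≤ 2 := by
  have := aFun_le_s18 hd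
  rw [le_div_iff₀ (by positivity)] at this
  nlinarith [pi_lt_d2, pi_pos]

theorem one_div_le_aFun_add_two {d : ℝ} (hd : 0 < d) : 1 / d ≤ aFun d + 2 := by
  have hpi : 3 / 2 ≤ π ^ 2 / 6 := by nlinarith [pi_gt_three]
  calc 1 / d ≤ 3 / 2 * (1 / d) ^ 2 - 2 * (1 / d) + 2 := by nlinarith [sq_nonneg (1 / d - 1)]
    _ ≤ π ^ 2 / 6 * (1 / d) ^ 2 - 2 * (1 / d) + 2 := by gcongr
    _ = π ^ 2 / 6 / d ^ 2 - 2 / d + 2 := by ring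
    _ ≤ aFun d + 2 := by gcongr; exact le_aFun hd

theorem rpow_one_sixth_le {d x : ℝ} (hd : 0 < d) (hx : 0 ≤ x) (hxd : x * d ^ 2 ≤ 2) :
    x ^ (1 / 6 : ℝ) ≤ 2 * d ^ (-1 / 3 : ℝ) := by
  have hxd' : x ≤ 2 * d ^ (-2 : ℝ) := by
    rwa [rpow_neg hd.le, rpow_ofNat, ← div_eq_mul_inv, le_div_iff₀ (by positivity)]
  calc x ^ (1 / 6 : ℝ) ≤ (2 * d ^ (-2 : ℝ)) ^ (1 / 6 : ℝ) := by gcongr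
    _ = 2 ^ (1 / 6 : ℝ) * d ^ (-1 / 3 : ℝ) := by
        rw [mul_rpow zero_le_two (by positivity), ← rpow_mul hd.le]; norm_num
    _ ≤ 2 * d ^ (-1 / 3 : ℝ) := by
        gcongr
        exact rpow_le_self_of_one_le one_le_two (by norm_num)

theorem rpow_one_sixth_div_log_sq_le {d x : ℝ} (hd : 0 < d) (hx : 0 ≤ x) (hxd : x * d ^ 2 ≤ 2) :
    1 / 160 * x ^ (1 / 6 : ℝ) / log x ^ 2 ≤
      (d ^ ((4 : ℝ) / 3) / log x) ^ 2 / (80 * d ^ 3) := by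
  have hsq : (d ^ ((4 : ℝ) / 3)) ^ 2 = d ^ 3 * d ^ (-1 / 3 : ℝ) := by
    rw [← rpow_natCast, ← rpow_natCast, ← rpow_mul hd.le, ← rpow_add hd]; norm_num
  calc 1 / 160 * x ^ (1 / 6 : ℝ) / log x ^ 2
      ≤ 1 / 160 * (2 * d ^ (-1 / 3 : ℝ)) / log x ^ 2 := by
        gcongr; exact rpow_one_sixth_le hd hx hxd
    _ = (d ^ ((4 : ℝ) / 3) / log x) ^ 2 / (80 * d ^ 3) := by
        rw [div_pow, hsq]; field_simp; norm_num

theorem isLittleO_exp_neg_rpow_div_log_sq {a c : ℝ} (ha : 0 < a) (hc : 0 < c) (s : ℝ) :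
    (fun x => exp (-(c * x ^ a / log x ^ 2))) =o[atTop] fun x : ℝ => x ^ s := by
  have hratio : Tendsto (fun x : ℝ => exp (a * log x) / log x ^ (3 : ℝ)) atTop atTop :=
    (tendsto_exp_mul_div_rpow_atTop 3 a ha).comp tendsto_log_atTop
  have hgap : Tendsto (fun x : ℝ => log x * (s + c * (exp (a * log x) / log x ^ (3 : ℝ))))
      atTop atTop :=
    tendsto_log_atTop.atTop_mul_atTop₀
      (tendsto_const_nhds.add_atTop (hratio.const_mul_atTop hc))
  have hexp : (fun x => exp (-(c * x ^ a / log x ^ 2))) =o[atTop] fun x => exp (s * log x) := by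
    rw [isLittleO_exp_comp_exp_comp]
    refine hgap.congr' ?_
    filter_upwards [eventually_gt_atTop 1] with x hx
    have hlog := log_pos hx
    rw [rpow_ofNat, rpow_def_of_pos (zero_lt_one.trans hx), mul_comm (log x) a]
    field_simp
    ring
  refine hexp.congr' .rfl ?_
  filter_upwards [eventually_gt_atTop 0] with x hx
  rw [rpow_def_of_pos hx, mul_comm]

theorem norm_tailIntegral_saddle_le (m : ℕ) {n : ℕ} (hn : 3 ≤ n) {d : ℝ} (hd : 0 < d)
    (h : aFun d = n) :
    ‖tailIntegral m n d (d ^ ((4 : ℝ) / 3) / log n)‖ ≤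
      exp (2 * hrConst * √n) * exp (-(1 / 160 * (n : ℝ) ^ (1 / 6 : ℝ) / log n ^ 2)) *
        (m ! * (4 * n) ^ (m + 2)) := by
  have hn3 : (3 : ℝ) ≤ n := mod_cast hn
  have hlog : 1 ≤ log n := by
    rw [le_log_iff_exp_le (by linarith)]
    exact exp_one_lt_three.le.trans hn3
  have hnd : n * d ^ 2 ≤ 2 := h ▸ aFun_mul_sq_le_two hd
  have hd1 : d ≤ 1 := by nlinarith
  have hδ : d ^ ((4 : ℝ) / 3) / log n ≤ d :=
    (div_le_self (by positivity) hlog).trans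
      (rpow_le_self_of_le_one hd.le hd1 (by norm_num))
  have hinv : 2 / d ≤ 4 * n := by
    have := one_div_le_aFun_add_two hd
    rw [h] at this
    rw [← mul_one_div]
    linarith
  refine (norm_tailIntegral_le m n hd hd1 (by positivity) hδ).trans ?_
  rw [← exp_add]
  gcongr
  linarith [mul_add_logEuler_exp_neg_le hd (by linarith) h,
    rpow_one_sixth_div_log_sq_le hd n.cast_nonneg hnd]

theorem exp_two_hrConst_mul_sqrt_isBigO :
    ∃ K : ℕ, (fun n : ℕ => exp (2 * hrConst * √n)) =O[atTop]
      fun n : ℕ => (Fintype.card (Nat.Partition n) : ℝ) * (n : ℝ) ^ K := by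
  obtain ⟨K, A, hA, hp⟩ := exists_mul_hrGrowth_le_card_partition
  refine ⟨K, .of_bound A⁻¹ ?_⟩
  filter_upwards [eventually_gt_atTop 0] with n hn
  have : (0 : ℝ) < n := mod_cast hn
  rw [norm_of_nonneg (exp_pos _).le, norm_of_nonneg (by positivity), ← div_eq_inv_mul,
    le_div_iff₀' hA]
  calc A * exp (2 * hrConst * √n) = A * hrGrowth K n * n ^ K := by
        rw [hrGrowth]; field_simp
    _ ≤ Fintype.card (Nat.Partition n) * (n : ℝ) ^ K := by gcongr; exact hp n

theorem tailIntegral_isBigO (m : ℕ) {d : ℕ → ℝ}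
    (hd : ∀ n : ℕ, 0 < n → 0 < d n ∧ aFun (d n) = n) :
    ∃ R : ℕ, (fun n => tailIntegral m n (d n) (d n ^ ((4 : ℝ) / 3) / log n)) =O[atTop]
      fun n : ℕ => (Fintype.card (Nat.Partition n) : ℝ) *
        ((n : ℝ) ^ R * exp (-(1 / 160 * (n : ℝ) ^ (1 / 6 : ℝ) / log n ^ 2))) := by
  obtain ⟨K, hK⟩ := exp_two_hrConst_mul_sqrt_isBigO
  have hmajorant : (fun n => tailIntegral m n (d n) (d n ^ ((4 : ℝ) / 3) / log n)) =O[atTop]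
      fun n : ℕ => exp (2 * hrConst * √n) *
        ((n : ℝ) ^ (m + 2) * exp (-(1 / 160 * (n : ℝ) ^ (1 / 6 : ℝ) / log n ^ 2))) := by
    refine .of_bound (m ! * 4 ^ (m + 2)) ?_
    filter_upwards [eventually_ge_atTop 3] with n hn
    obtain ⟨hpos, hsaddle⟩ := hd n (by lia)
    refine (norm_tailIntegral_saddle_le m hn hpos hsaddle).trans_eq ?_
    rw [norm_of_nonneg (by positivity), mul_pow]
    ring
  exact ⟨K + (m + 2), (hmajorant.trans (hK.mul (isBigO_refl _ _))).congr_right fun n => by ring⟩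

end SaddleAsymptotics

theorem tail_integral_negligible_general (m : ℕ) (s : ℝ) (d : ℕ → ℝ)
    (hd : ∀ n : ℕ, 0 < n → 0 < d n ∧ aFun (d n) = n) :
    (fun n => tailIntegral m n (d n) (d n ^ ((4 : ℝ) / 3) / Real.log n)) =o[atTop]
      fun n : ℕ => (Fintype.card (Nat.Partition n) : ℝ) * (n : ℝ) ^ s := by
  obtain ⟨R, hR⟩ := tailIntegral_isBigO m hd
  have hdecay : (fun n : ℕ => Real.exp (-(1 / 160 * (n : ℝ) ^ (1 / 6 : ℝ) / Real.log n ^ 2)))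
      =o[atTop] fun n : ℕ => (n : ℝ) ^ (s - R) :=
    (isLittleO_exp_neg_rpow_div_log_sq (by norm_num) (by norm_num) (s - R)).comp_tendsto
      tendsto_natCast_atTop_atTop
  have hpoly : (fun n : ℕ => (n : ℝ) ^ R * (n : ℝ) ^ (s - R)) =ᶠ[atTop] fun n => (n : ℝ) ^ s := by
    filter_upwards [eventually_gt_atTop 0] with n hn
    rw [← Real.rpow_natCast, ← Real.rpow_add (mod_cast hn), add_sub_cancel]
  exact hR.trans_isLittleO <| (isBigO_refl _ _).mul_isLittleO <|
    ((isBigO_refl _ _).mul_isLittleO hdecay).trans_eventuallyEq hpoly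

/-- **The tail integral is negligible** (formula (30) of the paper): for fixed `m ≥ 1`,
with `d_n` solving `Σ_{j≥1} j·e^{−jd}/(1 − e^{−jd}) = n` and `δ_n = d_n^{4/3}/log n`,
`J₂(m,n) = (e^{n d_n}/(2π))·∫_{δ_n ≤ |θ| ≤ π} g(e^{−d_n+iθ})·F_m(e^{−d_n+iθ})·e^{−iθn} dθ`
satisfies `J₂(m,n) = o(p(n)·n^{(m+1)/2})` as `n → ∞`. -/
theorem tail_integral_negligible (m : ℕ) (hm : 1 ≤ m) (d : ℕ → ℝ)
    (hd : ∀ n : ℕ, 0 < n → 0 < d n ∧ aFun (d n) = n) :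
    (fun n : ℕ =>
        ((Real.exp (n * d n) / (2 * Real.pi) : ℝ) : ℂ) *
          ∫ θ in {θ : ℝ | d n ^ ((4 : ℝ) / 3) / Real.log n ≤ |θ| ∧ |θ| ≤ Real.pi},
            gC (Complex.exp (-(d n : ℂ) + θ * Complex.I)) *
              FC m (Complex.exp (-(d n : ℂ) + θ * Complex.I)) *
              Complex.exp (-(θ * n) * Complex.I))
      =o[atTop]
        (fun n : ℕ =>
          (Fintype.card (Nat.Partition n) : ℝ) * (n : ℝ) ^ (((m : ℝ) + 1) / 2)) :=
  tail_integral_negligible_general m _ d hd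
end
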